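/- arXiv:1312.2487 — 7 statements merged into one kernel-verified Lean document; each statement's English description precedes it below -/
import Mathlib

section
/- Let ρ be a nonzero finite Borel measure on the interval (−π,π] and let θ ∈ ℝ be fixed. Then the function h(r) = ∫_{(−π,π]} (r²−1)/((log r)(1 − 2r cos(θ+x) + r²)) dρ(x) is strictly increasing on the interval (0,1). -/
/-!
In terms of `t = -log r` the integrand is `sinh t / (t * (cosh t - c))`, where `c` is the cosine of
the angle. The sign of its derivative in `t` is opposite to that of
`sinh t * (cosh t - c) - t * (1 - c * cosh t)`, which is affine in `c` and equals
`(sinh t - t) * (cosh t + 1)` at `c = -1` and `(sinh t + t) * (cosh t - 1)` at `c = 1`. Both are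
positive for `t > 0`, so for every `c ∈ [-1, 1]` the integrand strictly decreases in `t`, that is,
strictly increases in `r`.
-/

open MeasureTheory Set

section Kernel

open Real

variable {t c : ℝ}

lemma cosh_sub_pos (ht : t ≠ 0) (hc : c ≤ 1) : 0 < cosh t - c :=
  sub_pos.2 (hc.trans_lt (one_lt_cosh.2 ht))

lemma mul_one_sub_mul_cosh_lt_sinh_mul_cosh_sub (ht : 0 < t) (hc : c ∈ Icc (-1) 1) :
    t * (1 - c * cosh t) < sinh t * (cosh t - c) := by
  have hsinh : t < sinh t := self_lt_sinh_iff.2 ht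
  have hcosh : 1 < cosh t := one_lt_cosh.2 ht.ne'
  have at_neg_one : 0 < (sinh t - t) * (cosh t + 1) := mul_pos (by linarith) (by linarith)
  have at_one : 0 < (sinh t + t) * (cosh t - 1) := mul_pos (by linarith) (by linarith)
  have interpolate : sinh t * (cosh t - c) - t * (1 - c * cosh t) =
      (1 - c) / 2 * ((sinh t - t) * (cosh t + 1)) +
        (1 + c) / 2 * ((sinh t + t) * (cosh t - 1)) := by ring
  have weight_left : 0 ≤ (1 - c) / 2 := by linarith [hc.2]
  have weight_right : 0 ≤ (1 + c) / 2 := by linarith [hc.1]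
  rw [← sub_pos, interpolate]
  exact convex_Ioi (0 : ℝ) at_neg_one at_one weight_left weight_right (by ring)

lemma hasDerivAt_sinh_div_mul_cosh_sub (h : t * (cosh t - c) ≠ 0) :
    HasDerivAt (fun t ↦ sinh t / (t * (cosh t - c)))
      ((t * (1 - c * cosh t) - sinh t * (cosh t - c)) / (t * (cosh t - c)) ^ 2) t := by
  have hdenom := (hasDerivAt_id' t).fun_mul ((hasDerivAt_cosh t).sub_const c)
  refine ((hasDerivAt_sinh t).fun_div hdenom h).congr_deriv ?_
  congr 1
  linear_combination t * cosh_sq t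

lemma strictAntiOn_sinh_div_mul_cosh_sub (hc : c ∈ Icc (-1) 1) :
    StrictAntiOn (fun t ↦ sinh t / (t * (cosh t - c))) (Ioi 0) := by
  have denom_pos {t : ℝ} (ht : 0 < t) : 0 < t * (cosh t - c) :=
    mul_pos ht (cosh_sub_pos ht.ne' hc.2)
  have hderiv {t : ℝ} (ht : 0 < t) := hasDerivAt_sinh_div_mul_cosh_sub (denom_pos ht).ne'
  refine strictAntiOn_of_deriv_neg (convex_Ioi 0)
    (fun t ht ↦ (hderiv ht).continuousAt.continuousWithinAt) fun t ht ↦ ?_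
  rw [interior_Ioi] at ht
  rw [(hderiv ht).deriv]
  exact div_neg_of_neg_of_pos
    (sub_neg.2 (mul_one_sub_mul_cosh_lt_sinh_mul_cosh_sub ht hc)) (pow_pos (denom_pos ht) 2)

lemma sq_sub_one_div_log_mul_eq {r : ℝ} (hr : 0 < r) (c : ℝ) :
    (r ^ 2 - 1) / (log r * (1 - 2 * r * c + r ^ 2)) =
      sinh (-log r) / (-log r * (cosh (-log r) - c)) := by
  have hsinh : r ^ 2 - 1 = 2 * r * sinh (log r) := by rw [sinh_log hr]; field_simp
  have hcosh : 1 - 2 * r * c + r ^ 2 = 2 * r * (cosh (log r) - c) := by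
    rw [cosh_log hr]; field_simp; ring
  rw [hsinh, hcosh, sinh_neg, cosh_neg, neg_mul, neg_div_neg_eq, mul_left_comm (log r),
    mul_div_mul_left _ _ (by positivity)]

end Kernel

section Integral

variable {Ω : Type*} [MeasurableSpace Ω] {μ : Measure Ω}

lemma integral_strict_mono {f g : Ω → ℝ} (hμ : μ ≠ 0) (hf : Integrable f μ) (hg : Integrable g μ)
    (hfg : ∀ᵐ ω ∂μ, f ω < g ω) : ∫ ω, f ω ∂μ < ∫ ω, g ω ∂μ := by
  have hle : f ≤ᵐ[μ] g := hfg.mono fun _ ↦ le_of_lt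
  refine (integral_mono_ae hf hg hle).lt_of_ne fun heq ↦ hμ ?_
  have hae : f =ᵐ[μ] g := (integral_eq_iff_of_ae_le hf hg hle).1 heq
  rw [← ae_eq_bot, ← Filter.eventually_false_iff_eq_bot]
  filter_upwards [hfg, hae] with ω hlt heq using hlt.ne heq

lemma integrable_sinh_div_mul_cosh_sub [IsFiniteMeasure μ] {t : ℝ} (ht : 0 < t) {c : Ω → ℝ}
    (hc : AEMeasurable c μ) (hc_le : ∀ᵐ ω ∂μ, c ω ≤ 1) :
    Integrable (fun ω ↦ Real.sinh t / (t * (Real.cosh t - c ω))) μ := by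
  refine .of_mem_Icc 0 (Real.sinh t / (t * (Real.cosh t - 1))) (by fun_prop) ?_
  filter_upwards [hc_le] with ω hω
  have hone : 0 < Real.cosh t - 1 := cosh_sub_pos ht.ne' le_rfl
  have hcω : 0 < Real.cosh t - c ω := cosh_sub_pos ht.ne' hω
  exact ⟨by positivity, by gcongr⟩

theorem h_strictMonoOn_general [IsFiniteMeasure μ] (hμ : μ ≠ 0) {φ : Ω → ℝ}
    (hφ : AEMeasurable φ μ) :
    StrictMonoOn
      (fun r : ℝ ↦ ∫ ω, (r ^ 2 - 1) / (Real.log r * (1 - 2 * r * Real.cos (φ ω) + r ^ 2)) ∂μ)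
      (Ioo 0 1) := by
  intro a ha b hb hab
  have neg_log_pos {r : ℝ} (hr : r ∈ Ioo (0 : ℝ) 1) : 0 < -Real.log r :=
    neg_pos.2 (Real.log_neg hr.1 hr.2)
  have hint {r : ℝ} (hr : r ∈ Ioo (0 : ℝ) 1) :=
    integrable_sinh_div_mul_cosh_sub (neg_log_pos hr) (Real.measurable_cos.comp_aemeasurable hφ)
      (ae_of_all μ fun ω ↦ Real.cos_le_one (φ ω))
  have hlog : -Real.log b < -Real.log a := neg_lt_neg (Real.log_lt_log ha.1 hab)
  simp only [sq_sub_one_div_log_mul_eq ha.1, sq_sub_one_div_log_mul_eq hb.1]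
  exact integral_strict_mono hμ (hint ha) (hint hb) <| ae_of_all μ fun ω ↦
    strictAntiOn_sinh_div_mul_cosh_sub (Real.cos_mem_Icc (φ ω)) (neg_log_pos hb) (neg_log_pos ha)
      hlog

end Integral

/-- For a nonzero finite Borel measure `ρ` on `(−π,π]` and a fixed `θ ∈ ℝ`, the function
`h(r) = ∫ (r²−1)/((log r)(1 − 2r cos(θ+x) + r²)) dρ(x)` is strictly increasing on
`(0,1)`. -/
theorem h_strictMonoOn (ρ : Measure ℝ) [IsFiniteMeasure ρ] (hρ : ρ ≠ 0)
    (hsupp : ρ (Set.Ioc (-Real.pi) Real.pi)ᶜ = 0) (θ : ℝ) :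
    StrictMonoOn
      (fun r : ℝ =>
        ∫ x, (r ^ 2 - 1) / (Real.log r * (1 - 2 * r * Real.cos (θ + x) + r ^ 2)) ∂ρ)
      (Set.Ioo 0 1) :=
  h_strictMonoOn_general hρ (by fun_prop)
end

section
/- Let α ∈ ℂ with |α| = 1, let σ be a nonzero finite Borel measure on the unit circle 𝕋, and define Φ(z) = α z exp(∫_𝕋 (1+ξz)/(1−ξz) dσ(ξ)) for z in the open unit disc 𝔻. Then for every θ ∈ ℝ there is at most one r ∈ (0,1) with |Φ(re^{iθ})| = 1; that is, if r₁, r₂ ∈ (0,1) satisfy |Φ(r₁e^{iθ})| = 1 = |Φ(r₂e^{iθ})|, then r₁ = r₂. -/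
open MeasureTheory Complex Set Metric

/-- The free Lévy–Hinčin form `Φ(z) = α z exp(∫_𝕋 (1+ξz)/(1−ξz) dσ(ξ))`. -/
noncomputable def PhiLH (α : ℂ) (σ : Measure ℂ) (z : ℂ) : ℂ :=
  α * z * Complex.exp (∫ ξ, (1 + ξ * z) / (1 - ξ * z) ∂σ)

/-!
Harnack's inequality in infinitesimal form says that a positive harmonic function `u` on the unit
disc makes `r ↦ (1 + r) / (1 - r) * u (r e^{iθ})` nondecreasing; it suffices to check this for the
kernels `w ↦ Re ((1 + ξ w) / (1 - ξ w))`. On the other hand `(1 + r) / (1 - r) * log r` is strictly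
increasing on `(0, 1)`, because `2 log r > r - r⁻¹` there. As `log |Φ(r e^{iθ})|` is
`log |α| + log r` plus the integral of the kernels, `(1 + r) / (1 - r) * log |Φ(r e^{iθ})|` is
strictly increasing as soon as `|α| ≥ 1`, and it vanishes exactly where `|Φ| = 1`.
-/

lemma sub_inv_lt_two_mul_log {r : ℝ} (hr₀ : 0 < r) (hr₁ : r < 1) :
    r - r⁻¹ < 2 * Real.log r := by
  have h := Real.self_lt_sinh_iff.2 (neg_pos.2 (Real.log_neg hr₀ hr₁))
  rw [Real.sinh_neg, Real.sinh_log hr₀] at h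
  linarith

lemma monotoneOn_one_add_div_one_sub : MonotoneOn (fun r : ℝ ↦ (1 + r) / (1 - r)) (Iio 1) := by
  intro r hr s hs hrs
  have hr' : 0 < 1 - r := sub_pos.2 hr
  have hs' : 0 < 1 - s := sub_pos.2 hs
  simp only
  rw [div_le_div_iff₀ hr' hs']
  linarith

lemma strictMonoOn_one_add_div_one_sub_mul_log :
    StrictMonoOn (fun r : ℝ ↦ (1 + r) / (1 - r) * Real.log r) (Ioo 0 1) := by
  have hderiv (r : ℝ) (hr : r ∈ Ioo (0 : ℝ) 1) :
      HasDerivAt (fun r : ℝ ↦ (1 + r) / (1 - r) * Real.log r)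
        ((2 * Real.log r - (r - r⁻¹)) / (1 - r) ^ 2) r := by
    have h₀ : r ≠ 0 := hr.1.ne'
    have h₁ : 1 - r ≠ 0 := (sub_pos.2 hr.2).ne'
    have h := (((hasDerivAt_id' r).const_add 1).fun_div ((hasDerivAt_id' r).const_sub 1) h₁).fun_mul
      (Real.hasDerivAt_log h₀)
    refine h.congr_deriv ?_
    field_simp
    ring
  refine strictMonoOn_of_hasDerivWithinAt_pos (convex_Ioo 0 1)
    (fun r hr ↦ (hderiv r hr).continuousAt.continuousWithinAt)
    (fun r hr ↦ (hderiv r (interior_subset hr)).hasDerivWithinAt) fun r hr ↦ ?_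
  obtain ⟨hr₀, hr₁⟩ := interior_subset hr
  exact div_pos (sub_pos.2 (sub_inv_lt_two_mul_log hr₀ hr₁)) (pow_pos (sub_pos.2 hr₁) 2)

lemma monotoneOn_one_sub_mul_div_one_sub_sq {a : ℝ} (ha : a ≤ 1) :
    MonotoneOn (fun r : ℝ ↦ (1 - r ^ 2 * a) / (1 - r ^ 2)) (Ico 0 1) := by
  intro r hr s hs hrs
  have hr' : 0 < 1 - r ^ 2 := sub_pos.2 (pow_lt_one₀ hr.1 hr.2 two_ne_zero)
  have hs' : 0 < 1 - s ^ 2 := sub_pos.2 (pow_lt_one₀ hs.1 hs.2 two_ne_zero)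
  have hsq : r ^ 2 ≤ s ^ 2 := pow_le_pow_left₀ hr.1 hrs 2
  simp only
  rw [div_le_div_iff₀ hr' hs']
  linarith [mul_nonneg (sub_nonneg.2 ha) (sub_nonneg.2 hsq)]

section Kernel

variable {w : ℂ}

lemma norm_ofReal_mul_lt_one (hw : ‖w‖ ≤ 1) {r : ℝ} (hr : r ∈ Ico (0 : ℝ) 1) :
    ‖(r : ℂ) * w‖ < 1 := by
  rw [norm_mul, norm_real, Real.norm_of_nonneg hr.1]
  exact (mul_le_of_le_one_right hr.1 hw).trans_lt hr.2

lemma norm_one_sub_pos (hw : ‖w‖ < 1) : 0 < ‖1 - w‖ :=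
  norm_pos_iff.2 <| sub_ne_zero.2 fun h ↦ by simp [← h] at hw

lemma norm_one_sub_ofReal_mul_sq (r : ℝ) (w : ℂ) :
    ‖1 - (r : ℂ) * w‖ ^ 2 = 1 - 2 * r * w.re + r ^ 2 * ‖w‖ ^ 2 := by
  simp only [← normSq_eq_norm_sq, normSq_sub, normSq_ofReal, normSq_one, one_mul,
    conj_re, map_mul, conj_ofReal, re_ofReal_mul]
  ring

lemma re_one_add_div_one_sub (w : ℂ) :
    ((1 + w) / (1 - w)).re = (1 - ‖w‖ ^ 2) / ‖1 - w‖ ^ 2 := by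
  simpa [herglotzRieszKernel, poissonKernel] using
    (congrFun (poissonKernel_eq_re_herglotzRieszKernel (c := 0) (w := w)) 1).symm

lemma monotoneOn_one_add_div_norm_one_sub_mul (hw : ‖w‖ ≤ 1) :
    MonotoneOn (fun r : ℝ ↦ (1 + r) / ‖1 - (r : ℂ) * w‖) (Ico 0 1) := by
  intro r hr s hs hrs
  have hr₀ : 0 ≤ r := hr.1
  have hs₀ : 0 ≤ s := hs.1
  simp only
  rw [div_le_div_iff₀ (norm_one_sub_pos (norm_ofReal_mul_lt_one hw hr))
      (norm_one_sub_pos (norm_ofReal_mul_lt_one hw hs)),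
    ← sq_le_sq₀ (by positivity) (by positivity), mul_pow, mul_pow,
    norm_one_sub_ofReal_mul_sq, norm_one_sub_ofReal_mul_sq, ← sub_nonneg]
  have hrs₁ : 0 ≤ 1 - r * s := sub_nonneg.2 (mul_le_one₀ hr.2.le hs.1 hs.2.le)
  have hre : 0 ≤ 1 + w.re := by linarith [neg_le_of_abs_le ((abs_re_le_norm w).trans hw)]
  have hsq : 0 ≤ 1 - ‖w‖ ^ 2 := sub_nonneg.2 (pow_le_one₀ (norm_nonneg w) hw)
  calc
    0 ≤ (s - r) * (2 * (1 - r * s) * (1 + w.re) + (r + s + 2 * r * s) * (1 - ‖w‖ ^ 2)) := by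
      positivity
    _ = _ := by ring

lemma one_add_div_one_sub_mul_re_kernel {r : ℝ} (hr : r ∈ Ico (0 : ℝ) 1) (w : ℂ) :
    (1 + r) / (1 - r) * ((1 + r * w) / (1 - r * w)).re =
      ((1 + r) / ‖1 - (r : ℂ) * w‖) ^ 2 * ((1 - r ^ 2 * ‖w‖ ^ 2) / (1 - r ^ 2)) := by
  have h_sub : 1 - r ≠ 0 := (sub_pos.2 hr.2).ne'
  have h_add : 1 + r ≠ 0 := (add_pos_of_pos_of_nonneg one_pos hr.1).ne'
  have h_factor : 1 - r ^ 2 = (1 - r) * (1 + r) := by ring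
  rw [re_one_add_div_one_sub, norm_mul, norm_real, Real.norm_eq_abs, mul_pow, sq_abs, h_factor]
  field_simp

lemma monotoneOn_one_add_div_one_sub_mul_re_kernel (hw : ‖w‖ ≤ 1) :
    MonotoneOn (fun r : ℝ ↦ (1 + r) / (1 - r) * ((1 + r * w) / (1 - r * w)).re) (Ico 0 1) := by
  have hw_sq : ‖w‖ ^ 2 ≤ 1 := pow_le_one₀ (norm_nonneg w) hw
  have h_nonneg (r : ℝ) (hr : r ∈ Ico (0 : ℝ) 1) : 0 ≤ (1 + r) / ‖1 - (r : ℂ) * w‖ :=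
    div_nonneg (add_nonneg zero_le_one hr.1) (norm_nonneg _)
  have h_ratio_nonneg (r : ℝ) (hr : r ∈ Ico (0 : ℝ) 1) :
      0 ≤ (1 - r ^ 2 * ‖w‖ ^ 2) / (1 - r ^ 2) := by
    have hr_sq : r ^ 2 ≤ 1 := pow_le_one₀ hr.1 hr.2.le
    exact div_nonneg (sub_nonneg.2 (mul_le_one₀ hr_sq (sq_nonneg _) hw_sq)) (sub_nonneg.2 hr_sq)
  intro r hr s hs hrs
  simp only [one_add_div_one_sub_mul_re_kernel hr, one_add_div_one_sub_mul_re_kernel hs]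
  exact mul_le_mul
    (pow_le_pow_left₀ (h_nonneg r hr) (monotoneOn_one_add_div_norm_one_sub_mul hw hr hs hrs) 2)
    (monotoneOn_one_sub_mul_div_one_sub_sq hw_sq hr hs hrs) (h_ratio_nonneg r hr) (sq_nonneg _)

end Kernel

section Integral

variable {σ : Measure ℂ} [IsFiniteMeasure σ]

lemma integrable_one_add_mul_div_one_sub_mul (hσ : ∀ᵐ ξ ∂σ, ‖ξ‖ ≤ 1) {z : ℂ} (hz : ‖z‖ < 1) :
    Integrable (fun ξ ↦ (1 + ξ * z) / (1 - ξ * z)) σ := by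
  refine Integrable.of_bound (C := 2 / (1 - ‖z‖)) (Measurable.aestronglyMeasurable (by fun_prop)) ?_
  filter_upwards [hσ] with ξ hξ
  have h_mul : ‖ξ * z‖ ≤ ‖z‖ := by
    rw [norm_mul]
    exact mul_le_of_le_one_left (norm_nonneg z) hξ
  have h_num : ‖1 + ξ * z‖ ≤ 2 := by
    linarith [norm_add_le 1 (ξ * z), norm_one (α := ℂ)]
  have h_den : 1 - ‖z‖ ≤ ‖1 - ξ * z‖ := by
    linarith [norm_sub_norm_le 1 (ξ * z), norm_one (α := ℂ)]
  rw [norm_div]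
  exact div_le_div₀ zero_le_two h_num (sub_pos.2 hz) h_den

lemma log_norm_PhiLH (hσ : ∀ᵐ ξ ∂σ, ‖ξ‖ ≤ 1) {α z : ℂ} (hα : α ≠ 0) (hz₀ : z ≠ 0)
    (hz₁ : ‖z‖ < 1) :
    Real.log ‖PhiLH α σ z‖ =
      Real.log ‖α‖ + Real.log ‖z‖ + ∫ ξ, ((1 + ξ * z) / (1 - ξ * z)).re ∂σ := by
  have h_re : ∫ ξ, ((1 + ξ * z) / (1 - ξ * z)).re ∂σ = (∫ ξ, (1 + ξ * z) / (1 - ξ * z) ∂σ).re :=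
    integral_re (integrable_one_add_mul_div_one_sub_mul hσ hz₁)
  rw [h_re, PhiLH, norm_mul, norm_mul, norm_exp,
    Real.log_mul (mul_ne_zero (norm_ne_zero_iff.2 hα) (norm_ne_zero_iff.2 hz₀))
      (Real.exp_pos _).ne',
    Real.log_mul (norm_ne_zero_iff.2 hα) (norm_ne_zero_iff.2 hz₀), Real.log_exp]

lemma monotoneOn_one_add_div_one_sub_mul_integral_re (hσ : ∀ᵐ ξ ∂σ, ‖ξ‖ ≤ 1) {ζ : ℂ}
    (hζ : ‖ζ‖ ≤ 1) :
    MonotoneOn (fun r : ℝ ↦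
      (1 + r) / (1 - r) * ∫ ξ, ((1 + ξ * (r * ζ)) / (1 - ξ * (r * ζ))).re ∂σ) (Ico 0 1) := by
  intro r hr s hs hrs
  have h_int (t : ℝ) (ht : t ∈ Ico (0 : ℝ) 1) : Integrable
      (fun ξ ↦ (1 + t) / (1 - t) * ((1 + ξ * (t * ζ)) / (1 - ξ * (t * ζ))).re) σ :=
    (integrable_one_add_mul_div_one_sub_mul hσ (norm_ofReal_mul_lt_one hζ ht)).re.const_mul _
  simp only [← integral_const_mul]
  refine integral_mono_ae (h_int r hr) (h_int s hs) ?_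
  filter_upwards [hσ] with ξ hξ
  have hξζ : ‖ξ * ζ‖ ≤ 1 := by
    rw [norm_mul]
    exact mul_le_one₀ hξ (norm_nonneg ζ) hζ
  simpa only [mul_left_comm] using monotoneOn_one_add_div_one_sub_mul_re_kernel hξζ hr hs hrs

lemma strictMonoOn_one_add_div_one_sub_mul_log_norm_PhiLH (hσ : ∀ᵐ ξ ∂σ, ‖ξ‖ ≤ 1) {α ζ : ℂ}
    (hα : 1 ≤ ‖α‖) (hζ : ‖ζ‖ = 1) :
    StrictMonoOn (fun r : ℝ ↦ (1 + r) / (1 - r) * Real.log ‖PhiLH α σ (r * ζ)‖) (Ioo 0 1) := by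
  have h_const : MonotoneOn (fun r : ℝ ↦ (1 + r) / (1 - r) * Real.log ‖α‖) (Ioo 0 1) :=
    fun r hr s hs hrs ↦ mul_le_mul_of_nonneg_right
      (monotoneOn_one_add_div_one_sub hr.2 hs.2 hrs) (Real.log_nonneg hα)
  have h_integral :=
    (monotoneOn_one_add_div_one_sub_mul_integral_re hσ hζ.le).mono Ioo_subset_Ico_self
  refine ((h_const.add_strictMono strictMonoOn_one_add_div_one_sub_mul_log).add_monotone
    h_integral).congr fun r hr ↦ ?_
  have hα₀ : α ≠ 0 := norm_pos_iff.1 (one_pos.trans_le hα)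
  have hrζ : ‖(r : ℂ) * ζ‖ = r := by
    rw [norm_mul, hζ, mul_one, norm_real, Real.norm_of_nonneg hr.1.le]
  have hrζ₀ : (r : ℂ) * ζ ≠ 0 := norm_pos_iff.1 (hrζ.symm ▸ hr.1)
  simp only [log_norm_PhiLH hσ hα₀ hrζ₀ (hrζ.trans_lt hr.2), hrζ, mul_add]

end Integral

theorem radial_boundary_unique_general (α : ℂ) (hα : 1 ≤ ‖α‖)
    (σ : Measure ℂ) [IsFiniteMeasure σ] (hσ : ∀ᵐ ξ ∂σ, ‖ξ‖ ≤ 1) (θ : ℝ)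
    (r₁ r₂ : ℝ) (hr₁ : r₁ ∈ Ioo (0 : ℝ) 1) (hr₂ : r₂ ∈ Ioo (0 : ℝ) 1)
    (h₁ : ‖PhiLH α σ ((r₁ : ℂ) * Complex.exp (θ * Complex.I))‖ = 1)
    (h₂ : ‖PhiLH α σ ((r₂ : ℂ) * Complex.exp (θ * Complex.I))‖ = 1) :
    r₁ = r₂ := by
  have h_mono := strictMonoOn_one_add_div_one_sub_mul_log_norm_PhiLH hσ hα
    (norm_exp_ofReal_mul_I θ)
  refine h_mono.injOn hr₁ hr₂ ?_
  simp only [h₁, h₂, Real.log_one, mul_zero]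

/-- Proposition 2.4: for the free Lévy–Hinčin form `Φ` associated with `|α| = 1` and a
nonzero finite Borel measure `σ` on the unit circle, for every `θ ∈ ℝ` there is at most
one `r ∈ (0,1)` with `|Φ(re^{iθ})| = 1`. -/
theorem radial_boundary_unique (α : ℂ) (hα : ‖α‖ = 1)
    (σ : Measure ℂ) [IsFiniteMeasure σ] (hσ : σ ≠ 0)
    (hsupp : σ (sphere (0 : ℂ) 1)ᶜ = 0) (θ : ℝ)
    (r₁ r₂ : ℝ) (hr₁ : r₁ ∈ Set.Ioo (0 : ℝ) 1) (hr₂ : r₂ ∈ Set.Ioo (0 : ℝ) 1)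
    (h1 : ‖PhiLH α σ ((r₁ : ℂ) * Complex.exp (θ * Complex.I))‖ = 1)
    (h2 : ‖PhiLH α σ ((r₂ : ℂ) * Complex.exp (θ * Complex.I))‖ = 1) :
    r₁ = r₂ := by
  have h_sphere : ∀ᵐ ξ ∂σ, ξ ∈ sphere (0 : ℂ) 1 := hsupp
  exact radial_boundary_unique_general α hα.ge σ
    (h_sphere.mono fun _ hξ ↦ (mem_sphere_zero_iff_norm.1 hξ).le) θ r₁ r₂ hr₁ hr₂ h1 h2
end

section
/- Let μ be a Borel probability measure on the unit circle 𝕋, and suppose there is a continuous function h on the closed unit disc 𝔻̄ such that h(z) = η_μ(z) for all z ∈ 𝔻 and |h(ξ)| < 1 for every ξ ∈ 𝕋. Then μ is absolutely continuous with respect to arclength measure dθ on 𝕋, and its density is the continuous function f(e^{iθ}) = (1/2π)·(1 − |h(e^{−iθ})|²)/|1 − h(e^{−iθ})|²; that is, μ(A) = ∫_{{θ ∈ (−π,π] : e^{iθ} ∈ A}} f(e^{iθ}) dθ for every Borel set A ⊆ 𝕋. -/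
open MeasureTheory Complex Set Metric

/-- The ψ-transform of a measure on the unit circle: `ψ_μ(z) = ∫_𝕋 ξz/(1−ξz) dμ(ξ)`. -/
noncomputable def psiC (μ : Measure ℂ) (z : ℂ) : ℂ :=
  ∫ ξ, (ξ * z) / (1 - ξ * z) ∂μ

/-- The η-transform: `η_μ(z) = ψ_μ(z)/(1+ψ_μ(z))`. -/
noncomputable def etaC (μ : Measure ℂ) (z : ℂ) : ℂ :=
  psiC μ z / (1 + psiC μ z)

/-!
Let `C(z) = ∫ (1 - ξz)⁻¹ dμ(ξ)`. For a probability measure on the circle, `C = 1 + ψ = (1 - η)⁻¹`,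
so `G = (1 - h)⁻¹` extends `C` continuously to the closed disc. Since `2 Re (1 - ξz)⁻¹ ≥ 1`, the
function `2 Re G - 1 = (1 - |h|²) / |1 - h|²` is nonnegative, and the Cauchy integral formula for
`G`, combined with the mean value property for `conj G`, shows that the measure with density
`ξ ↦ 2 Re G(ξ⁻¹) - 1` against normalized arc length has the same transform `C`. The Taylor
coefficients of `C` at `0` are the moments of `μ`; on the circle these are Fourier coefficients,
which determine a measure because trigonometric polynomials are dense.
-/

section Uniqueness

variable {T : ℝ}

theorem integral_fourier_eq_of_natCast {P Q : Measure (AddCircle T)}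
    (hPQ : ∀ n : ℕ, ∫ x, fourier (n : ℤ) x ∂P = ∫ x, fourier (n : ℤ) x ∂Q) (n : ℤ) :
    ∫ x, fourier n x ∂P = ∫ x, fourier n x ∂Q := by
  obtain ⟨m, rfl | rfl⟩ := n.eq_nat_or_neg
  · exact hPQ m
  · simp only [fourier_neg, integral_conj, hPQ m]

theorem ext_of_integral_fourier_eq [Fact (0 < T)] {P Q : Measure (AddCircle T)} [IsFiniteMeasure P]
    [IsFiniteMeasure Q] (hPQ : ∀ n : ℤ, ∫ x, fourier n x ∂P = ∫ x, fourier n x ∂Q) : P = Q := by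
  have integrable {R : Measure (AddCircle T)} [IsFiniteMeasure R] (g : C(AddCircle T, ℂ)) :
      Integrable g R :=
    (BoundedContinuousFunction.mkOfCompact g).integrable R
  have integral_eq_of_mem_span (f : C(AddCircle T, ℂ))
      (hf : f ∈ Submodule.span ℂ (range (@fourier T))) : ∫ x, f x ∂P = ∫ x, f x ∂Q := by
    induction hf using Submodule.span_induction with
    | mem _ hf =>
      obtain ⟨n, rfl⟩ := hf
      exact hPQ n
    | zero => simp
    | add f₁ f₂ _ _ h₁ h₂ =>
      simp only [ContinuousMap.add_apply, integral_add (integrable f₁) (integrable f₂), h₁, h₂]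
    | smul c f _ hf => simp only [ContinuousMap.smul_apply, integral_smul, hf]
  refine ext_of_forall_mem_subalgebra_integral_eq_of_polish (𝕜 := ℂ)
    (A := fourierSubalgebra.comap (BoundedContinuousFunction.toContinuousMapStarₐ ℂ)) ?_ ?_
  · intro x y hxy
    obtain ⟨-, ⟨g, hg, rfl⟩, hgxy⟩ := fourierSubalgebra_separatesPoints hxy
    exact ⟨g, ⟨g, ⟨BoundedContinuousFunction.mkOfCompact g, hg, rfl⟩, rfl⟩, hgxy⟩
  · intro g hg
    have hg_span : g.toContinuousMap ∈ Submodule.span ℂ (range (@fourier T)) := by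
      rw [← fourierSubalgebra_coe]
      exact hg
    exact integral_eq_of_mem_span g.toContinuousMap hg_span

theorem ext_of_integral_pow_eq {μ ν : Measure ℂ} [IsFiniteMeasure μ] [IsFiniteMeasure ν]
    (hμ : ∀ᵐ ξ ∂μ, ‖ξ‖ = 1) (hν : ∀ᵐ ξ ∂ν, ‖ξ‖ = 1)
    (hμν : ∀ n : ℕ, ∫ ξ, ξ ^ n ∂μ = ∫ ξ, ξ ^ n ∂ν) : μ = ν := by
  have : Fact (0 < 2 * Real.pi) := ⟨Real.two_pi_pos⟩
  let angle (z : ℂ) : AddCircle (2 * Real.pi) := (arg z : ℝ)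
  let point (x : AddCircle (2 * Real.pi)) : ℂ := x.toCircle
  have measurable_angle : Measurable angle := AddCircle.measurable_mk'.comp measurable_arg
  have measurable_point : Measurable point :=
    (continuous_subtype_val.comp AddCircle.continuous_toCircle).measurable
  have point_angle {z : ℂ} (hz : ‖z‖ = 1) : point (angle z) = z := by
    have := norm_mul_exp_arg_mul_I z
    simp_all [point, angle, AddCircle.toCircle_apply_mk]
  have integral_fourier {μ : Measure ℂ} (hμ : ∀ᵐ ξ ∂μ, ‖ξ‖ = 1) (n : ℕ) :
      ∫ x, fourier (n : ℤ) x ∂μ.map angle = ∫ ξ, ξ ^ n ∂μ := by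
    rw [integral_map measurable_angle.aemeasurable (by fun_prop)]
    refine integral_congr_ae ?_
    filter_upwards [hμ] with z hz
    have : (fourier (n : ℤ) (angle z) : ℂ) = point (angle z) ^ n := by
      simp [point, fourier_apply, AddCircle.toCircle_nsmul]
    rw [this, point_angle hz]
  have map_angle_eq : μ.map angle = ν.map angle :=
    ext_of_integral_fourier_eq <| integral_fourier_eq_of_natCast fun n => by
      rw [integral_fourier hμ, integral_fourier hν, hμν]
  have map_point_map_angle {μ : Measure ℂ} (hμ : ∀ᵐ ξ ∂μ, ‖ξ‖ = 1) :
      (μ.map angle).map point = μ := by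
    rw [Measure.map_map measurable_point measurable_angle]
    exact (Measure.map_congr (hμ.mono fun z hz => point_angle hz)).trans Measure.map_id
  rw [← map_point_map_angle hμ, map_angle_eq, map_point_map_angle hν]

end Uniqueness

theorem two_mul_re_inv_one_sub {w : ℂ} (hw : w ≠ 1) :
    2 * ((1 - w)⁻¹).re - 1 = (1 - ‖w‖ ^ 2) / ‖1 - w‖ ^ 2 := by
  have norm_sq_ne : ‖1 - w‖ ^ 2 ≠ 0 := by simpa [sub_eq_zero] using hw.symm
  rw [eq_div_iff norm_sq_ne, inv_re, sub_mul, mul_assoc, normSq_eq_norm_sq,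
    div_mul_cancel₀ _ norm_sq_ne, ← normSq_eq_norm_sq, ← normSq_eq_norm_sq, normSq_apply,
    normSq_apply]
  simp only [sub_re, one_re, sub_im, one_im]
  ring

section CauchyTransform

/-- The Cauchy transform `C_μ(z) = ∫ (1 - ξz)⁻¹ dμ(ξ)`, the generating function of the moments of
`μ`; for a probability measure on the unit circle it is `1 + ψ_μ`. -/
noncomputable def cauchyTransform (μ : Measure ℂ) (z : ℂ) : ℂ :=
  ∫ ξ, (1 - ξ * z)⁻¹ ∂μ

theorem cauchyTransform_zero (μ : Measure ℂ) : cauchyTransform μ 0 = μ.real univ := by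
  simp [cauchyTransform]

variable {μ : Measure ℂ} [IsFiniteMeasure μ]

theorem integrable_inv_one_sub_mul (hμ : ∀ᵐ ξ ∂μ, ‖ξ‖ = 1) {z : ℂ} (hz : ‖z‖ < 1) :
    Integrable (fun ξ => (1 - ξ * z)⁻¹) μ := by
  refine Integrable.of_bound (Measurable.aestronglyMeasurable (by fun_prop)) (1 - ‖z‖)⁻¹ ?_
  filter_upwards [hμ] with ξ hξ
  have norm_ge : 1 - ‖z‖ ≤ ‖1 - ξ * z‖ := by
    simpa [hξ] using norm_sub_norm_le 1 (ξ * z)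
  rw [norm_inv]
  gcongr

theorem psiC_eq_cauchyTransform_sub (hμ : ∀ᵐ ξ ∂μ, ‖ξ‖ = 1) {z : ℂ} (hz : ‖z‖ < 1) :
    psiC μ z = cauchyTransform μ z - μ.real univ := by
  have integrand_eq : (fun ξ => ξ * z / (1 - ξ * z)) =ᵐ[μ] fun ξ => (1 - ξ * z)⁻¹ - 1 := by
    filter_upwards [hμ] with ξ hξ
    have : 1 - ξ * z ≠ 0 := sub_ne_zero.2 fun h => by
      simpa [hξ, hz.ne'] using congr_arg norm h
    field_simp
    ring
  rw [psiC, integral_congr_ae integrand_eq,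
    integral_sub (integrable_inv_one_sub_mul hμ hz) (integrable_const 1)]
  simp [cauchyTransform]

theorem measureReal_univ_le_two_mul_re_cauchyTransform (hμ : ∀ᵐ ξ ∂μ, ‖ξ‖ = 1) {z : ℂ}
    (hz : ‖z‖ < 1) : μ.real univ ≤ 2 * (cauchyTransform μ z).re := by
  have integrable := integrable_inv_one_sub_mul hμ hz
  calc μ.real univ = ∫ _, 1 ∂μ := by simp
    _ ≤ ∫ ξ, 2 * ((1 - ξ * z)⁻¹).re ∂μ := by
      refine integral_mono_ae (integrable_const 1) (integrable.re.const_mul 2) ?_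
      filter_upwards [hμ] with ξ hξ
      have norm_lt : ‖ξ * z‖ < 1 := by simpa [hξ] using hz
      have poisson_nonneg : 0 ≤ (1 - ‖ξ * z‖ ^ 2) / ‖1 - ξ * z‖ ^ 2 :=
        div_nonneg (by nlinarith [norm_nonneg (ξ * z)]) (sq_nonneg _)
      rw [← two_mul_re_inv_one_sub fun h => by simp [h] at norm_lt] at poisson_nonneg
      linarith
    _ = 2 * (cauchyTransform μ z).re := by
      rw [integral_const_mul, cauchyTransform]
      congr 1
      exact integral_re integrable

theorem hasSum_integral_pow_mul (hμ : ∀ᵐ ξ ∂μ, ‖ξ‖ = 1) {z : ℂ} (hz : ‖z‖ < 1) :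
    HasSum (fun n : ℕ => (∫ ξ, ξ ^ n ∂μ) * z ^ n) (cauchyTransform μ z) := by
  have norm_pow (n : ℕ) : ∀ᵐ ξ ∂μ, ‖(ξ * z) ^ n‖ = ‖z‖ ^ n :=
    hμ.mono fun ξ hξ => by simp [hξ]
  have integrable (n : ℕ) : Integrable (fun ξ => (ξ * z) ^ n) μ :=
    .of_bound (by fun_prop) (‖z‖ ^ n) ((norm_pow n).mono fun _ => le_of_eq)
  have summable : Summable fun n : ℕ => ∫ ξ, ‖(ξ * z) ^ n‖ ∂μ := by
    simp only [integral_congr_ae (norm_pow _), integral_const]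
    exact (summable_geometric_of_lt_one (norm_nonneg z) hz).const_smul _
  have tsum_eq : (fun ξ => ∑' n : ℕ, (ξ * z) ^ n) =ᵐ[μ] fun ξ => (1 - ξ * z)⁻¹ :=
    hμ.mono fun ξ hξ => tsum_geometric_of_norm_lt_one (by simpa [hξ] using hz)
  rw [cauchyTransform, ← integral_congr_ae tsum_eq]
  simpa only [← integral_mul_const, ← mul_pow] using
    hasSum_integral_of_summable_integral_norm integrable summable

theorem hasFPowerSeriesOnBall_cauchyTransform (hμ : ∀ᵐ ξ ∂μ, ‖ξ‖ = 1) :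
    HasFPowerSeriesOnBall (cauchyTransform μ)
      (.ofScalars ℂ fun n : ℕ => ∫ ξ, ξ ^ n ∂μ) 0 1 where
  r_le := by
    refine FormalMultilinearSeries.le_radius_of_bound (r := 1) _ (μ.real univ) fun n => ?_
    have := norm_integral_le_of_norm_le_const (μ := μ) (f := (· ^ n)) (C := 1)
      (hμ.mono fun ξ hξ => by simp [hξ])
    simpa using this
  r_pos := one_pos
  hasSum {y} hy := by
    have y_mem_ball : y ∈ ball (0 : ℂ) 1 := by rwa [← eball_ofReal, ENNReal.ofReal_one]
    simpa [FormalMultilinearSeries.ofScalars_apply_eq, mul_comm] using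
      hasSum_integral_pow_mul hμ (mem_ball_zero_iff.1 y_mem_ball)

theorem differentiableOn_cauchyTransform (hμ : ∀ᵐ ξ ∂μ, ‖ξ‖ = 1) :
    DifferentiableOn ℂ (cauchyTransform μ) (ball 0 1) := by
  simpa [← eball_ofReal] using (hasFPowerSeriesOnBall_cauchyTransform hμ).differentiableOn

theorem ext_of_eqOn_cauchyTransform {ν : Measure ℂ} [IsFiniteMeasure ν]
    (hμ : ∀ᵐ ξ ∂μ, ‖ξ‖ = 1) (hν : ∀ᵐ ξ ∂ν, ‖ξ‖ = 1)
    (hμν : EqOn (cauchyTransform μ) (cauchyTransform ν) (ball 0 1)) : μ = ν := by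
  have hμ_series := (hasFPowerSeriesOnBall_cauchyTransform hμ).hasFPowerSeriesAt
  have hν_series := (hasFPowerSeriesOnBall_cauchyTransform hν).hasFPowerSeriesAt
  have series_eq := (hμ_series.congr
    (hμν.eventuallyEq_of_mem (ball_mem_nhds 0 one_pos))).eq_formalMultilinearSeries hν_series
  refine ext_of_integral_pow_eq hμ hν fun n => ?_
  simpa using congr_arg (fun p => p.coeff n) series_eq

end CauchyTransform

section ArcLength

open scoped ComplexConjugate

/-- Arc length on the unit circle, normalized to total mass one and viewed as a measure on `ℂ`. -/
noncomputable def normalizedArcLength : Measure ℂ :=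
  ENNReal.ofReal (2 * Real.pi)⁻¹ • (volume.restrict (Ioc (-Real.pi) Real.pi)).map (circleMap 0 1)

instance : IsFiniteMeasure normalizedArcLength :=
  Measure.smul_finite _ ENNReal.ofReal_ne_top

theorem ae_norm_eq_one_normalizedArcLength : ∀ᵐ ξ ∂normalizedArcLength, ‖ξ‖ = 1 := by
  refine Measure.ae_smul_measure ?_ _
  rw [ae_map_iff (by fun_prop) (measurableSet_eq_fun (by fun_prop) (by fun_prop))]
  exact .of_forall fun θ => by simp

theorem integrable_normalizedArcLength {E : Type*} [NormedAddCommGroup E] {f : ℂ → E}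
    (hf : ContinuousOn f (sphere 0 1)) : Integrable f normalizedArcLength := by
  have restrict_sphere : normalizedArcLength.restrict (sphere 0 1) = normalizedArcLength :=
    Measure.restrict_eq_self_of_ae_mem <|
      ae_norm_eq_one_normalizedArcLength.mono fun ξ hξ => by simpa using hξ
  rw [← restrict_sphere]
  exact hf.integrableOn_compact (isCompact_sphere 0 1)

section Integral

variable {E : Type*} [NormedAddCommGroup E] [NormedSpace ℝ E]

theorem setIntegral_normalizedArcLength {f : ℂ → E} (hf : ContinuousOn f (sphere 0 1))
    {A : Set ℂ} (hA : MeasurableSet A) :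
    ∫ ξ in A, f ξ ∂normalizedArcLength =
      (2 * Real.pi)⁻¹ • ∫ θ in Ioc (-Real.pi) Real.pi ∩ circleMap 0 1 ⁻¹' A,
        f (circleMap 0 1 θ) := by
  have hf_map : AEStronglyMeasurable f
      ((volume.restrict (Ioc (-Real.pi) Real.pi)).map (circleMap 0 1)) :=
    (integrable_normalizedArcLength hf).aestronglyMeasurable.mono_ac <|
      Measure.AbsolutelyContinuous.rfl.smul_right (by simp [Real.pi_pos])
  have measurable_circleMap : Measurable (circleMap 0 1) := (continuous_circleMap 0 1).measurable
  rw [normalizedArcLength, Measure.restrict_smul, integral_smul_measure,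
    setIntegral_map hA hf_map measurable_circleMap.aemeasurable,
    Measure.restrict_restrict (measurable_circleMap hA), inter_comm,
    ENNReal.toReal_ofReal (by positivity)]

theorem integral_normalizedArcLength {f : ℂ → E} (hf : ContinuousOn f (sphere 0 1)) :
    ∫ ξ, f ξ ∂normalizedArcLength = Real.circleAverage f 0 1 := by
  have hf_univ := setIntegral_normalizedArcLength hf MeasurableSet.univ
  rw [Measure.restrict_univ, preimage_univ, inter_univ] at hf_univ
  rw [hf_univ, Real.circleAverage_eq_integral_add (-Real.pi),
    intervalIntegral.integral_comp_add_right (fun θ => f (circleMap 0 1 θ)),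
    intervalIntegral.integral_of_le (by linarith [Real.pi_pos])]
  ring_nf

end Integral

theorem cauchyTransform_withDensity_normalizedArcLength {u : ℂ → ℝ}
    (hu : ContinuousOn u (sphere 0 1)) (hu_nonneg : ∀ ξ ∈ sphere 0 1, 0 ≤ u ξ) {w : ℂ}
    (hw : ‖w‖ < 1) :
    cauchyTransform (normalizedArcLength.withDensity fun ξ => ENNReal.ofReal (u ξ)) w =
      Real.circleAverage (fun z => z / (z - w) * u z⁻¹) 0 1 := by
  have denominator_ne {ξ : ℂ} (hξ : ξ ∈ sphere (0 : ℂ) 1) : 1 - ξ * w ≠ 0 :=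
    sub_ne_zero.2 fun h => by simpa [mem_sphere_zero_iff_norm.1 hξ, hw.ne'] using congr_arg norm h
  calc cauchyTransform (normalizedArcLength.withDensity fun ξ => ENNReal.ofReal (u ξ)) w
      = ∫ ξ, (ENNReal.ofReal (u ξ)).toReal • (1 - ξ * w)⁻¹ ∂normalizedArcLength :=
        integral_withDensity_eq_integral_toReal_smul₀
          (integrable_normalizedArcLength hu).aemeasurable.ennreal_ofReal
          (.of_forall fun _ => ENNReal.ofReal_lt_top) _
    _ = ∫ ξ, u ξ • (1 - ξ * w)⁻¹ ∂normalizedArcLength := by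
        refine integral_congr_ae ?_
        filter_upwards [ae_norm_eq_one_normalizedArcLength] with ξ hξ
        rw [ENNReal.toReal_ofReal (hu_nonneg ξ (by simpa using hξ))]
    _ = Real.circleAverage (fun ξ => u ξ • (1 - ξ * w)⁻¹) 0 1 :=
        integral_normalizedArcLength <|
          hu.smul (ContinuousOn.inv₀ (by fun_prop) fun _ => denominator_ne)
    _ = Real.circleAverage (fun z => z / (z - w) * u z⁻¹) 0 1 := by
        rw [← Real.circleAverage_zero_one_congr_inv]
        refine Real.circleAverage_congr_sphere fun z hz => ?_
        have : z ≠ 0 := ne_zero_of_mem_unit_sphere ⟨z, by simpa using hz⟩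
        rw [real_smul, mul_comm, inv_mul_eq_div z w, one_sub_div this, inv_div]

theorem circleAverage_div_sub_mul_conj {G : ℂ → ℂ} (hG : DiffContOnCl ℂ G (ball 0 1)) {w : ℂ}
    (hw : ‖w‖ < 1) :
    Real.circleAverage (fun z => z / (z - w) * conj (G z)) 0 1 = conj (G 0) := by
  have denominator_ne {z : ℂ} (hz : ‖z‖ ≤ 1) : 1 - conj w * z ≠ 0 := by
    refine sub_ne_zero.2 fun h => ?_
    have : ‖w‖ * ‖z‖ = 1 := by simpa using congr_arg norm h.symm
    nlinarith [norm_nonneg w]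
  have kernel_diffContOnCl : DiffContOnCl ℂ (fun z => (1 - conj w * z)⁻¹) (ball 0 1) :=
    DifferentiableOn.diffContOnCl_ball (U := closedBall 0 1)
      (DifferentiableOn.inv (by fun_prop) fun z hz => denominator_ne (by simpa using hz)) subset_rfl
  have mul_diffContOnCl : DiffContOnCl ℂ (fun z => (1 - conj w * z)⁻¹ * G z) (ball 0 |1|) := by
    simpa using kernel_diffContOnCl.smul hG
  calc Real.circleAverage (fun z => z / (z - w) * conj (G z)) 0 1
      = Real.circleAverage (conjCLE ∘ fun z => (1 - conj w * z)⁻¹ * G z) 0 1 := by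
        refine Real.circleAverage_congr_sphere fun z hz => ?_
        have hz_norm : ‖z‖ = 1 := by simpa using hz
        have : z / (z - w) = conj (1 - conj w * z)⁻¹ := by
          rw [map_inv₀, map_sub, map_mul, map_one, conj_conj, ← inv_eq_conj hz_norm,
            ← div_eq_mul_inv, one_sub_div (norm_ne_zero_iff.1 (by simp [hz_norm])), inv_div]
        simp only [Function.comp_apply, conjCLE_apply, map_mul, this]
    _ = conjCLE (Real.circleAverage (fun z => (1 - conj w * z)⁻¹ * G z) 0 1) :=
        conjCLE.toContinuousLinearMap.circleAverage_comp_comm <|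
          ContinuousOn.circleIntegrable zero_le_one <|
            mul_diffContOnCl.continuousOn_ball.mono (by simpa using sphere_subset_closedBall)
    _ = conj (G 0) := by simp [mul_diffContOnCl.circleAverage]

theorem circleAverage_div_sub_mul_two_mul_re {G : ℂ → ℂ} (hG : DiffContOnCl ℂ G (ball 0 1)) {w : ℂ}
    (hw : ‖w‖ < 1) :
    Real.circleAverage (fun z => z / (z - w) * (2 * (G z).re : ℝ)) 0 1 = G w + conj (G 0) := by
  have continuousOn_G : ContinuousOn G (sphere 0 1) :=
    hG.continuousOn_ball.mono sphere_subset_closedBall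
  have continuousOn_conj_G : ContinuousOn (fun z => conj (G z)) (sphere 0 1) :=
    continuous_conj.comp_continuousOn' continuousOn_G
  have continuousOn_kernel : ContinuousOn (fun z => z / (z - w)) (sphere 0 1) :=
    ContinuousOn.div (by fun_prop) (by fun_prop) fun z hz => sub_ne_zero.2 fun h => by
      simp [h, hw.ne] at hz
  have cauchy : Real.circleAverage (fun z => z / (z - w) * G z) 0 1 = G w := by
    have hG_abs : DiffContOnCl ℂ G (ball 0 |1|) := by simpa using hG
    simpa using hG_abs.circleAverage_smul_div (w := w) (by simpa using hw)
  calc Real.circleAverage (fun z => z / (z - w) * (2 * (G z).re : ℝ)) 0 1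
      = Real.circleAverage (fun z => z / (z - w) * G z + z / (z - w) * conj (G z)) 0 1 := by
        simp only [← mul_add, add_conj]
    _ = G w + conj (G 0) := by
        rw [← cauchy, ← circleAverage_div_sub_mul_conj hG hw, Real.circleAverage_fun_add
          ((continuousOn_kernel.fun_mul continuousOn_G).circleIntegrable zero_le_one)
          ((continuousOn_kernel.fun_mul continuousOn_conj_G).circleIntegrable zero_le_one)]

end ArcLength

section ContinuousExtension

open scoped ComplexConjugate

variable {μ : Measure ℂ} [IsFiniteMeasure μ] {G : ℂ → ℂ}

theorem measureReal_univ_le_two_mul_re_of_mem_closedBall (hμ : ∀ᵐ ξ ∂μ, ‖ξ‖ = 1)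
    (hG : ContinuousOn G (closedBall 0 1)) (hμG : EqOn (cauchyTransform μ) G (ball 0 1)) {z : ℂ}
    (hz : z ∈ closedBall (0 : ℂ) 1) : μ.real univ ≤ 2 * (G z).re := by
  rw [← closure_ball _ one_ne_zero] at hG hz
  refine le_on_closure (f := fun _ => μ.real univ) (g := fun z => 2 * (G z).re) (fun z hz => ?_)
    continuousOn_const (by fun_prop) hz
  rw [← hμG hz]
  exact measureReal_univ_le_two_mul_re_cauchyTransform hμ (mem_ball_zero_iff.1 hz)

theorem continuousOn_two_mul_re_inv_sub (hG : ContinuousOn G (sphere 0 1)) (c : ℝ) :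
    ContinuousOn (fun ξ => 2 * (G ξ⁻¹).re - c) (sphere 0 1) := by
  have continuousOn_G_inv : ContinuousOn (fun ξ => G ξ⁻¹) (sphere 0 1) :=
    hG.comp (continuousOn_id.inv₀ fun ξ hξ => ne_zero_of_mem_unit_sphere ⟨ξ, hξ⟩)
      fun ξ hξ => by simp_all
  exact ((continuous_re.comp_continuousOn' continuousOn_G_inv).const_mul 2).sub continuousOn_const

theorem eq_withDensity_of_eqOn_cauchyTransform (hμ : ∀ᵐ ξ ∂μ, ‖ξ‖ = 1)
    (hG : ContinuousOn G (closedBall 0 1)) (hμG : EqOn (cauchyTransform μ) G (ball 0 1)) :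
    μ = normalizedArcLength.withDensity fun ξ =>
      ENNReal.ofReal (2 * (G ξ⁻¹).re - μ.real univ) := by
  let c : ℝ := μ.real univ / 2
  have density_continuousOn := continuousOn_two_mul_re_inv_sub
    (hG.mono sphere_subset_closedBall) (μ.real univ)
  have density_nonneg {ξ : ℂ} (hξ : ξ ∈ sphere (0 : ℂ) 1) : 0 ≤ 2 * (G ξ⁻¹).re - μ.real univ :=
    sub_nonneg.2 <| measureReal_univ_le_two_mul_re_of_mem_closedBall hμ hG hμG (by simp_all)
  have := isFiniteMeasure_withDensity_ofReal
    (integrable_normalizedArcLength density_continuousOn).hasFiniteIntegral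
  have diffContOnCl_sub : DiffContOnCl ℂ (fun z => G z - c) (ball 0 1) :=
    DiffContOnCl.sub_const ⟨(differentiableOn_cauchyTransform hμ).congr hμG.symm,
      by rwa [closure_ball _ one_ne_zero]⟩ _
  have G_zero_sub : G 0 - c = c := by
    rw [← hμG (by simp), cauchyTransform_zero, ← ofReal_sub, sub_half]
  refine ext_of_eqOn_cauchyTransform hμ
    ((withDensity_absolutelyContinuous _ _).ae_le ae_norm_eq_one_normalizedArcLength) fun w hw => ?_
  have hw_norm : ‖w‖ < 1 := mem_ball_zero_iff.1 hw
  calc cauchyTransform μ w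
      = G w - c + conj (G 0 - c) := by rw [hμG hw, G_zero_sub, conj_ofReal, sub_add_cancel]
    _ = Real.circleAverage (fun z => z / (z - w) * (2 * (G z - c).re : ℝ)) 0 1 :=
        (circleAverage_div_sub_mul_two_mul_re diffContOnCl_sub hw_norm).symm
    _ = Real.circleAverage (fun z => z / (z - w) * (2 * (G z⁻¹⁻¹).re - μ.real univ : ℝ)) 0 1 := by
        simp only [inv_inv, sub_re, ofReal_re, mul_sub, c, mul_div_cancel₀ _ (two_ne_zero' ℝ)]
    _ = cauchyTransform (normalizedArcLength.withDensity _) w :=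
        (cauchyTransform_withDensity_normalizedArcLength density_continuousOn
          (fun _ => density_nonneg) hw_norm).symm

theorem measure_toReal_eq_setIntegral (hμ : ∀ᵐ ξ ∂μ, ‖ξ‖ = 1)
    (hG : ContinuousOn G (closedBall 0 1)) (hμG : EqOn (cauchyTransform μ) G (ball 0 1))
    {A : Set ℂ} (hA : MeasurableSet A) :
    (μ A).toReal =
      ∫ θ in {θ : ℝ | θ ∈ Ioc (-Real.pi) Real.pi ∧ exp (θ * I) ∈ A},
        (2 * Real.pi)⁻¹ * (2 * (G (exp (-θ * I))).re - μ.real univ) := by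
  have density_continuousOn := continuousOn_two_mul_re_inv_sub
    (hG.mono sphere_subset_closedBall) (μ.real univ)
  have density_nonneg : ∀ᵐ ξ ∂normalizedArcLength, 0 ≤ 2 * (G ξ⁻¹).re - μ.real univ :=
    ae_norm_eq_one_normalizedArcLength.mono fun ξ hξ => sub_nonneg.2 <|
      measureReal_univ_le_two_mul_re_of_mem_closedBall hμ hG hμG (by simp [hξ])
  have circleMap_eq (θ : ℝ) : circleMap 0 1 θ = exp (θ * I) := by simp [circleMap]
  calc (μ A).toReal
      = ∫ ξ in A, (2 * (G ξ⁻¹).re - μ.real univ) ∂normalizedArcLength := by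
        rw [integral_eq_lintegral_of_nonneg_ae (ae_restrict_of_ae density_nonneg)
          (integrable_normalizedArcLength density_continuousOn).aestronglyMeasurable.restrict,
          ← withDensity_apply _ hA, ← eq_withDensity_of_eqOn_cauchyTransform hμ hG hμG]
    _ = ∫ θ in {θ : ℝ | θ ∈ Ioc (-Real.pi) Real.pi ∧ exp (θ * I) ∈ A},
          (2 * Real.pi)⁻¹ * (2 * (G (exp (-θ * I))).re - μ.real univ) := by
        rw [setIntegral_normalizedArcLength density_continuousOn hA, ← integral_smul]
        simp only [inter_def, mem_preimage, circleMap_eq, ← exp_neg, neg_mul, smul_eq_mul]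

end ContinuousExtension

section Eta

variable {μ : Measure ℂ} [IsProbabilityMeasure μ] {h : ℂ → ℂ}

theorem cauchyTransform_ne_zero (hμ : ∀ᵐ ξ ∂μ, ‖ξ‖ = 1) {z : ℂ} (hz : ‖z‖ < 1) :
    cauchyTransform μ z ≠ 0 := fun eq_zero => by
  have := measureReal_univ_le_two_mul_re_cauchyTransform hμ hz
  norm_num [eq_zero] at this

theorem one_sub_etaC (hμ : ∀ᵐ ξ ∂μ, ‖ξ‖ = 1) {z : ℂ} (hz : ‖z‖ < 1) :
    1 - etaC μ z = (cauchyTransform μ z)⁻¹ := by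
  have := cauchyTransform_ne_zero hμ hz
  rw [etaC, psiC_eq_cauchyTransform_sub hμ hz, probReal_univ, ofReal_one, add_sub_cancel]
  field_simp
  ring

theorem ne_one_of_eqOn_etaC (hμ : ∀ᵐ ξ ∂μ, ‖ξ‖ = 1) (heq : EqOn h (etaC μ) (ball 0 1))
    (hne : ∀ ξ ∈ sphere (0 : ℂ) 1, h ξ ≠ 1)
    {z : ℂ} (hz : z ∈ closedBall (0 : ℂ) 1) : h z ≠ 1 := by
  rw [← ball_union_sphere] at hz
  obtain hz | hz := hz
  · have norm_lt := mem_ball_zero_iff.1 hz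
    rw [heq hz, ne_comm, ← sub_ne_zero, one_sub_etaC hμ norm_lt]
    exact inv_ne_zero (cauchyTransform_ne_zero hμ norm_lt)
  · exact hne z hz

theorem continuous_eta_density (hc : ContinuousOn h (sphere 0 1))
    (hne : ∀ ξ ∈ sphere (0 : ℂ) 1, h ξ ≠ 1) :
    Continuous fun θ : ℝ =>
      (1 / (2 * Real.pi)) * (1 - ‖h (exp (-θ * I))‖ ^ 2) / ‖1 - h (exp (-θ * I))‖ ^ 2 := by
  have exp_mem_sphere (θ : ℝ) : exp (-θ * I) ∈ sphere (0 : ℂ) 1 := by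
    simpa using norm_exp_ofReal_mul_I (-θ)
  have continuous_h_exp : Continuous fun θ : ℝ => h (exp (-θ * I)) :=
    hc.comp_continuous (by fun_prop) exp_mem_sphere
  refine (continuous_const.mul (continuous_const.sub (continuous_h_exp.norm.pow 2))).div
    ((continuous_const.sub continuous_h_exp).norm.pow 2) fun θ => ?_
  simpa [sub_eq_zero] using (hne _ (exp_mem_sphere θ)).symm

end Eta

theorem density_from_continuous_eta_general (μ : Measure ℂ) [IsProbabilityMeasure μ]
    (hsupp : μ (sphere (0 : ℂ) 1)ᶜ = 0) (h : ℂ → ℂ)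
    (hc : ContinuousOn h (closedBall 0 1))
    (heq : ∀ z ∈ ball (0 : ℂ) 1, h z = etaC μ z)
    (hne : ∀ ξ ∈ sphere (0 : ℂ) 1, h ξ ≠ 1) :
    Continuous (fun θ : ℝ =>
      (1 / (2 * Real.pi)) * (1 - ‖h (Complex.exp (-θ * Complex.I))‖ ^ 2)
        / ‖1 - h (Complex.exp (-θ * Complex.I))‖ ^ 2) ∧
    ∀ A : Set ℂ, MeasurableSet A →
      (μ A).toReal =
        ∫ θ in {θ : ℝ | θ ∈ Set.Ioc (-Real.pi) Real.pi ∧ Complex.exp (θ * Complex.I) ∈ A},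
          (1 / (2 * Real.pi)) * (1 - ‖h (Complex.exp (-θ * Complex.I))‖ ^ 2)
            / ‖1 - h (Complex.exp (-θ * Complex.I))‖ ^ 2 := by
  have hμ : ∀ᵐ ξ ∂μ, ‖ξ‖ = 1 := by simpa [ae_iff, compl_def] using hsupp
  have h_ne_one {z : ℂ} (hz : z ∈ closedBall (0 : ℂ) 1) : h z ≠ 1 :=
    ne_one_of_eqOn_etaC hμ heq hne hz
  have cauchyTransform_eq : EqOn (cauchyTransform μ) (fun z => (1 - h z)⁻¹) (ball 0 1) :=
    fun z hz => by simp only [heq z hz, one_sub_etaC hμ (mem_ball_zero_iff.1 hz), inv_inv]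
  have continuousOn_inv : ContinuousOn (fun z => (1 - h z)⁻¹) (closedBall 0 1) :=
    (continuousOn_const.sub hc).inv₀ fun z hz => sub_ne_zero.2 (h_ne_one hz).symm
  refine ⟨continuous_eta_density (hc.mono sphere_subset_closedBall) hne, fun A hA => ?_⟩
  rw [measure_toReal_eq_setIntegral hμ continuousOn_inv cauchyTransform_eq hA]
  congr! 2 with θ
  have exp_mem : exp (-θ * I) ∈ closedBall (0 : ℂ) 1 := by
    simpa using (norm_exp_ofReal_mul_I (-θ)).le
  rw [probReal_univ, two_mul_re_inv_one_sub (h_ne_one exp_mem), one_div, mul_div_assoc]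

/-- If the η-transform of a Borel probability measure `μ` on the unit circle extends
continuously to the closed unit disc with boundary values of modulus strictly less
than 1, then `μ` is absolutely continuous with respect to arclength `dθ`, with
continuous density `f(e^{iθ}) = (1/2π)(1 − |h(e^{−iθ})|²)/|1 − h(e^{−iθ})|²`. -/
theorem density_from_continuous_eta (μ : Measure ℂ) [IsProbabilityMeasure μ]
    (hsupp : μ (sphere (0 : ℂ) 1)ᶜ = 0) (h : ℂ → ℂ)
    (hc : ContinuousOn h (closedBall 0 1))
    (heq : ∀ z ∈ ball (0 : ℂ) 1, h z = etaC μ z)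
    (hlt : ∀ ξ ∈ sphere (0 : ℂ) 1, ‖h ξ‖ < 1) :
    Continuous (fun θ : ℝ =>
      (1 / (2 * Real.pi)) * (1 - ‖h (Complex.exp (-θ * Complex.I))‖ ^ 2)
        / ‖1 - h (Complex.exp (-θ * Complex.I))‖ ^ 2) ∧
    ∀ A : Set ℂ, MeasurableSet A →
      (μ A).toReal =
        ∫ θ in {θ : ℝ | θ ∈ Set.Ioc (-Real.pi) Real.pi ∧ Complex.exp (θ * Complex.I) ∈ A},
          (1 / (2 * Real.pi)) * (1 - ‖h (Complex.exp (-θ * Complex.I))‖ ^ 2)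
            / ‖1 - h (Complex.exp (-θ * Complex.I))‖ ^ 2 := by
  refine density_from_continuous_eta_general μ hsupp h hc heq fun ξ hξ h_one => ?_
  simpa [h_one] using hlt ξ hξ
end

section
/- Let α ∈ ℂ with |α| = 1, let σ be a finite Borel measure on the unit circle 𝕋, and define Φ(z) = α z exp(∫_𝕋 (1+ξz)/(1−ξz) dσ(ξ)) for z in the open unit disc 𝔻. If z ∈ 𝔻, z ≠ 0, and |Φ(z)| ≤ 1, then ((1+|z|) log|z|)/(1−|z|) ≤ −σ(𝕋); equivalently, |z| ≤ g^{−1}(−σ(𝕋)) where g(r) = (1+r)log r/(1−r). -/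
open MeasureTheory Complex Set Metric

/-!
The map `w ↦ (1 + w) / (1 - w)` sends the disc `|w| ≤ r < 1` into the half-plane
`Re ≥ (1 - r) / (1 + r)`, by the lower Harnack bound for the Herglotz kernel. Integrating this
over `w = ξz`, `|ξ| ≤ 1`, gives `|Φ(z)| ≥ |α| |z| exp((1 - |z|) / (1 + |z|) · m)` with `m` the
total mass of `σ`, and the claim is the logarithm of this growth estimate.
-/

section HerglotzIntegral

variable {r : ℝ}

lemma le_re_one_add_div_one_sub {w : ℂ} (hw : ‖w‖ ≤ r) (hr : r < 1) :
    (1 - r) / (1 + r) ≤ ((1 + w) / (1 - w)).re :=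
  calc (1 - r) / (1 + r)
    _ ≤ (1 - ‖w‖) / (1 + ‖w‖) := by gcongr; linarith
    _ ≤ ((1 + w) / (1 - w)).re := by
      simpa only [sub_zero] using
        le_re_herglotzRieszKernel (c := 0) (z := 1) (w := w) (R := 1) (by simp)
          (mem_ball_zero_iff.2 (hw.trans_lt hr))

lemma norm_one_add_div_one_sub_le {w : ℂ} (hw : ‖w‖ ≤ r) (hr : r < 1) :
    ‖(1 + w) / (1 - w)‖ ≤ (1 + r) / (1 - r) := by
  have h_num : ‖1 + w‖ ≤ 1 + r := (norm_add_le 1 w).trans (by simpa using hw)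
  have h_den : 1 - r ≤ ‖1 - w‖ :=
    (sub_le_sub_left hw 1).trans (by simpa using norm_sub_norm_le 1 w)
  rw [norm_div]
  exact div_le_div₀ ((norm_nonneg _).trans h_num) h_num (sub_pos.2 hr) h_den

variable {Ω : Type*} [MeasurableSpace Ω] {μ : Measure Ω} [IsFiniteMeasure μ] {f : Ω → ℂ}

lemma integrable_one_add_div_one_sub (hf : AEStronglyMeasurable f μ)
    (hfr : ∀ᵐ x ∂μ, ‖f x‖ ≤ r) (hr : r < 1) :
    Integrable (fun x ↦ (1 + f x) / (1 - f x)) μ := by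
  refine .of_bound (C := (1 + r) / (1 - r)) ?_ ?_
  · exact ((hf.aemeasurable.const_add 1).div (hf.aemeasurable.const_sub 1)).aestronglyMeasurable
  · filter_upwards [hfr] with x hx using norm_one_add_div_one_sub_le hx hr

lemma mul_measureReal_univ_le_re_integral_one_add_div_one_sub (hf : AEStronglyMeasurable f μ)
    (hfr : ∀ᵐ x ∂μ, ‖f x‖ ≤ r) (hr : r < 1) :
    (1 - r) / (1 + r) * μ.real univ ≤ (∫ x, (1 + f x) / (1 - f x) ∂μ).re := by
  have h_int := integrable_one_add_div_one_sub hf hfr hr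
  calc (1 - r) / (1 + r) * μ.real univ
    _ = ∫ _, (1 - r) / (1 + r) ∂μ := by rw [integral_const, smul_eq_mul, mul_comm]
    _ ≤ ∫ x, ((1 + f x) / (1 - f x)).re ∂μ := by
      refine integral_mono_ae (integrable_const _) h_int.re ?_
      filter_upwards [hfr] with x hx using le_re_one_add_div_one_sub hx hr
    _ = (∫ x, (1 + f x) / (1 - f x) ∂μ).re := integral_re h_int

end HerglotzIntegral

lemma norm_PhiLH (α : ℂ) (σ : Measure ℂ) (z : ℂ) :
    ‖PhiLH α σ z‖ = ‖α‖ * ‖z‖ * Real.exp (∫ ξ, (1 + ξ * z) / (1 - ξ * z) ∂σ).re := by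
  rw [PhiLH, norm_mul, norm_mul, norm_exp]

lemma mul_exp_le_norm_PhiLH (α : ℂ) {σ : Measure ℂ} [IsFiniteMeasure σ]
    (hσ : ∀ᵐ ξ ∂σ, ‖ξ‖ ≤ 1) {z : ℂ} (hz : ‖z‖ < 1) :
    ‖α‖ * ‖z‖ * Real.exp ((1 - ‖z‖) / (1 + ‖z‖) * σ.real univ) ≤ ‖PhiLH α σ z‖ := by
  have h_norm : ∀ᵐ ξ ∂σ, ‖ξ * z‖ ≤ ‖z‖ := by
    filter_upwards [hσ] with ξ hξ
    rw [norm_mul]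
    exact mul_le_of_le_one_left (norm_nonneg z) hξ
  rw [norm_PhiLH]
  gcongr
  exact mul_measureReal_univ_le_re_integral_one_add_div_one_sub (by fun_prop) h_norm hz

theorem modulus_bound_from_Phi_general {α : ℂ} (hα : 1 ≤ ‖α‖) {σ : Measure ℂ}
    [IsFiniteMeasure σ] (hσ : ∀ᵐ ξ ∂σ, ‖ξ‖ ≤ 1) {z : ℂ} (hz : ‖z‖ < 1) (hz0 : z ≠ 0)
    (hΦ : ‖PhiLH α σ z‖ ≤ 1) :
    (1 + ‖z‖) * Real.log ‖z‖ / (1 - ‖z‖) ≤ -σ.real univ := by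
  have hz_pos : 0 < ‖z‖ := norm_pos_iff.2 hz0
  have h_growth : ‖z‖ * Real.exp ((1 - ‖z‖) / (1 + ‖z‖) * σ.real univ) ≤ 1 :=
    calc ‖z‖ * Real.exp ((1 - ‖z‖) / (1 + ‖z‖) * σ.real univ)
      _ ≤ ‖α‖ * ‖z‖ * Real.exp ((1 - ‖z‖) / (1 + ‖z‖) * σ.real univ) := by
        gcongr
        exact le_mul_of_one_le_left hz_pos.le hα
      _ ≤ 1 := (mul_exp_le_norm_PhiLH α hσ hz).trans hΦ
  have h_log : Real.log ‖z‖ + (1 - ‖z‖) / (1 + ‖z‖) * σ.real univ ≤ 0 := by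
    rw [← Real.log_exp ((1 - ‖z‖) / (1 + ‖z‖) * σ.real univ),
      ← Real.log_mul hz_pos.ne' (Real.exp_ne_zero _)]
    exact Real.log_nonpos (by positivity) h_growth
  have h_cleared : (1 + ‖z‖) * Real.log ‖z‖ + (1 - ‖z‖) * σ.real univ ≤ 0 :=
    calc (1 + ‖z‖) * Real.log ‖z‖ + (1 - ‖z‖) * σ.real univ
      _ = (1 + ‖z‖) * (Real.log ‖z‖ + (1 - ‖z‖) / (1 + ‖z‖) * σ.real univ) := by field_simp
      _ ≤ 0 := mul_nonpos_of_nonneg_of_nonpos (by positivity) h_log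
  rw [div_le_iff₀ (sub_pos.2 hz)]
  linarith

/-- If `|α| = 1`, `σ` is a finite Borel measure on the unit circle and `Φ` is the
associated free Lévy–Hinčin form, then `|Φ(z)| ≤ 1` for a nonzero `z` in the open unit
disc forces `((1+|z|) log|z|)/(1−|z|) ≤ −σ(𝕋)`. -/
theorem modulus_bound_from_Phi (α : ℂ) (hα : ‖α‖ = 1)
    (σ : Measure ℂ) [IsFiniteMeasure σ] (hsupp : σ (sphere (0 : ℂ) 1)ᶜ = 0)
    (z : ℂ) (hz : z ∈ ball (0 : ℂ) 1) (hz0 : z ≠ 0)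
    (hΦ : ‖PhiLH α σ z‖ ≤ 1) :
    ((1 + ‖z‖) * Real.log ‖z‖) / (1 - ‖z‖) ≤ -(σ (sphere (0 : ℂ) 1)).toReal := by
  have h_circle : ∀ᵐ ξ ∂σ, ξ ∈ sphere (0 : ℂ) 1 := mem_ae_iff.2 hsupp
  rw [measure_of_measure_compl_eq_zero hsupp]
  exact modulus_bound_from_Phi_general hα.ge
    (h_circle.mono fun _ hξ ↦ (mem_sphere_zero_iff_norm.1 hξ).le) (mem_ball_zero_iff.1 hz) hz0 hΦ
end

section
/- Fix t > 0 and set Φ_t(z) = z·exp(t(1+z)/(2−2z)) for z in the open unit disc 𝔻. For each n, let u_n : 𝔻 → ℂ be analytic with Re u_n(z) ≥ 0 for all z ∈ 𝔻, set Φ_n(z) = z·exp(u_n(z)), and let ω_n : 𝔻̄ → 𝔻̄ be continuous and one-to-one on the closed unit disc 𝔻̄, with ω_n(𝔻) ⊆ 𝔻, ω_n analytic in 𝔻, and Φ_n(ω_n(z)) = z for all z ∈ 𝔻. Assume Φ_n → Φ_t uniformly on every compact subset of 𝔻 as n → ∞. Then there exist N ≥ 1 and a constant C ∈ (0,1) such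 that |ω_n(z)| ≥ C|z| for all n ≥ N and all z ∈ 𝔻̄. -/
open Complex Set Metric Filter

/-!
Write `Φ n z = z * g n z` with `g n = exp ∘ u n`. A uniform bound for `Φ n` on a circle around `0`
bounds `g n` on that circle, hence on the enclosed disc by the maximum principle. When `ω n z` lies
in that disc, `z = ω n z * g n (ω n z)` gives `‖z‖ ≤ A * ‖ω n z‖` with a uniform `A`; when it does
not, `‖ω n z‖` is at least the radius of the circle. The boundary of the unit disc is reached by
continuity.
-/

theorem exists_eventually_norm_le_of_tendstoUniformlyOn {ι X E : Type*} [TopologicalSpace X]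
    [SeminormedAddCommGroup E] {F : ι → X → E} {f : X → E} {l : Filter ι} {K : Set X}
    (hK : IsCompact K) (hF : ∃ᶠ n in l, ContinuousOn (F n) K) (h : TendstoUniformlyOn F f l K) :
    ∃ M, ∀ᶠ n in l, ∀ x ∈ K, ‖F n x‖ ≤ M := by
  obtain ⟨B, hB⟩ := hK.exists_bound_of_continuousOn (h.continuousOn hF)
  refine ⟨B + 1, (Metric.tendstoUniformlyOn_iff.1 h 1 one_pos).mono fun n hn x hx ↦ ?_⟩
  calc ‖F n x‖ ≤ ‖f x‖ + ‖F n x - f x‖ := norm_le_insert' _ _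
    _ ≤ B + 1 := by
      rw [← dist_eq_norm, dist_comm]
      exact add_le_add (hB x hx) (hn x hx).le

theorem norm_le_div_of_norm_smul_le_on_sphere {E : Type*} [NormedAddCommGroup E]
    [NormedSpace ℂ E] {g : ℂ → E} {r M : ℝ} (hr : 0 < r) (hg : DiffContOnCl ℂ g (ball 0 r))
    (hM : ∀ z ∈ sphere (0 : ℂ) r, ‖z • g z‖ ≤ M) {w : ℂ} (hw : w ∈ closedBall (0 : ℂ) r) :
    ‖g w‖ ≤ M / r := by
  refine norm_le_of_forall_mem_frontier_norm_le isBounded_ball hg (fun z hz ↦ ?_)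
    (by rwa [closure_ball _ hr.ne'])
  rw [frontier_ball _ hr.ne'] at hz
  have hzg : ‖z • g z‖ = ‖g z‖ * r := by
    rw [norm_smul, mem_sphere_zero_iff_norm.1 hz, mul_comm]
  rw [le_div_iff₀ hr, ← hzg]
  exact hM z hz

theorem div_mul_norm_le_norm_of_mul_eq {g : ℂ → ℂ} {r M : ℝ} (hr : 0 < r) (hM₁ : 1 ≤ M)
    (hg : DiffContOnCl ℂ g (ball 0 r)) (hM : ∀ z ∈ sphere (0 : ℂ) r, ‖z * g z‖ ≤ M)
    {w z : ℂ} (hwz : w * g w = z) (hz : ‖z‖ ≤ 1) : r / M * ‖z‖ ≤ ‖w‖ := by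
  have : 0 < M := one_pos.trans_le hM₁
  rcases le_or_gt ‖w‖ r with hw | hw
  · have hgw : ‖g w‖ ≤ M / r :=
      norm_le_div_of_norm_smul_le_on_sphere hr hg hM (mem_closedBall_zero_iff.2 hw)
    calc r / M * ‖z‖ = r / M * (‖w‖ * ‖g w‖) := by rw [← hwz, norm_mul]
      _ ≤ r / M * (‖w‖ * (M / r)) := by gcongr
      _ = ‖w‖ := by field_simp
  · calc r / M * ‖z‖ ≤ r / M * 1 := by gcongr
      _ ≤ r := by rw [mul_one]; exact div_le_self hr.le hM₁
      _ ≤ ‖w‖ := hw.le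

theorem omega_quotient_bounded_below_general {ι : Type*} {l : Filter ι} {g ω : ι → ℂ → ℂ}
    {r M : ℝ} (hr : 0 < r) (hg : ∀ n, DiffContOnCl ℂ (g n) (ball 0 r))
    (hM : ∀ᶠ n in l, ∀ z ∈ sphere (0 : ℂ) r, ‖z * g n z‖ ≤ M)
    (hω : ∀ n, ContinuousOn (ω n) (closedBall 0 1))
    (hinv : ∀ n, ∀ z ∈ ball (0 : ℂ) 1, ω n z * g n (ω n z) = z) :
    ∃ C ∈ Ioo (0 : ℝ) 1, ∀ᶠ n in l, ∀ z ∈ closedBall (0 : ℂ) 1, C * ‖z‖ ≤ ‖ω n z‖ := by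
  obtain ⟨A, hA⟩ := exists_gt (max M (max 1 r))
  obtain ⟨hMA, h₁A, hrA⟩ : M < A ∧ 1 < A ∧ r < A := by simpa only [max_lt_iff] using hA
  have hA₀ : 0 < A := one_pos.trans h₁A
  refine ⟨r / A, ⟨div_pos hr hA₀, (div_lt_one hA₀).2 hrA⟩, hM.mono fun n hn z hz ↦ ?_⟩
  have hball : ∀ z ∈ ball (0 : ℂ) 1, r / A * ‖z‖ ≤ ‖ω n z‖ := fun z hz ↦
    div_mul_norm_le_norm_of_mul_eq hr h₁A.le (hg n) (fun w hw ↦ (hn w hw).trans hMA.le)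
      (hinv n z hz) (mem_ball_zero_iff.1 hz).le
  rw [← closure_ball _ one_ne_zero] at hz
  refine le_on_closure hball (by fun_prop) ?_ hz
  rw [closure_ball _ one_ne_zero]
  exact (hω n).norm

/-- Lemma 4.5: let `Φ_t(z) = z exp(t(1+z)/(2−2z))` and let `Φ_n(z) = z exp(u_n(z))`
with `u_n` analytic on the open unit disc and `Re u_n ≥ 0`, with global inverses
`ω_n : 𝔻̄ → 𝔻̄`. If `Φ_n → Φ_t` uniformly on compact subsets of `𝔻`, then there are
`N` and `C ∈ (0,1)` such that `|ω_n(z)| ≥ C|z|` for all `n ≥ N` and `z ∈ 𝔻̄`. -/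
theorem omega_quotient_bounded_below (t : ℝ) (ht : 0 < t)
    (u : ℕ → ℂ → ℂ) (hu : ∀ n, AnalyticOnNhd ℂ (u n) (ball 0 1))
    (hre : ∀ n, ∀ z ∈ ball (0 : ℂ) 1, 0 ≤ (u n z).re)
    (ω : ℕ → ℂ → ℂ)
    (hωc : ∀ n, ContinuousOn (ω n) (closedBall 0 1))
    (hωinj : ∀ n, Set.InjOn (ω n) (closedBall 0 1))
    (hωmapsc : ∀ n, Set.MapsTo (ω n) (closedBall 0 1) (closedBall 0 1))
    (hωmaps : ∀ n, Set.MapsTo (ω n) (ball 0 1) (ball 0 1))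
    (hωan : ∀ n, AnalyticOnNhd ℂ (ω n) (ball 0 1))
    (hinv : ∀ n, ∀ z ∈ ball (0 : ℂ) 1, ω n z * Complex.exp (u n (ω n z)) = z)
    (hconv : ∀ K : Set ℂ, K ⊆ ball (0 : ℂ) 1 → IsCompact K →
      TendstoUniformlyOn (fun n z => z * Complex.exp (u n z))
        (fun z => z * Complex.exp (t * (1 + z) / (2 - 2 * z))) atTop K) :
    ∃ N : ℕ, ∃ C : ℝ, C ∈ Set.Ioo (0 : ℝ) 1 ∧
      ∀ n ≥ N, ∀ z ∈ closedBall (0 : ℂ) 1, C * ‖z‖ ≤ ‖ω n z‖ := by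
  have hdisc : closedBall (0 : ℂ) (1 / 2) ⊆ ball 0 1 := closedBall_subset_ball one_half_lt_one
  have hcircle : sphere (0 : ℂ) (1 / 2) ⊆ ball 0 1 := sphere_subset_closedBall.trans hdisc
  have hg (n : ℕ) : DifferentiableOn ℂ (fun z ↦ exp (u n z)) (ball 0 1) :=
    (hu n).differentiableOn.cexp
  obtain ⟨M, hM⟩ := exists_eventually_norm_le_of_tendstoUniformlyOn (isCompact_sphere _ _)
    (.of_forall fun n ↦ continuousOn_id.mul ((hg n).continuousOn.mono hcircle))
    (hconv _ hcircle (isCompact_sphere _ _))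
  obtain ⟨C, hC, hbound⟩ := omega_quotient_bounded_below_general one_half_pos
    (fun n ↦ (hg n).diffContOnCl_ball hdisc) hM hωc hinv
  exact (eventually_atTop.1 hbound).imp fun N hN ↦ ⟨C, hC, hN⟩
end

section
/- Let s > 0, r ∈ (0,1), and θ ∈ ℝ, and set D = 2 − 4r cos θ + 2r² (so D ≥ 2(1−r)² > 0). If r·exp(s(1−r²)/D) < 1, then 2sr|sin θ|/D ≤ 2r·log r/(r²−1); moreover, 2r·log r/(r²−1) ≤ 1 holds for every r ∈ (0,1). -/
open Real Set

/-!
With `t = log r` one has `r² - 1 = 2r sinh t`, so the bound `2r log r / (r² - 1)` is `t / sinh t`,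
which lies in `[0, 1]` because `|t| ≤ |sinh t|` and the two have the same sign. Taking logarithms
in `r exp (s (1 - r²) / D) ≤ 1` gives `s / D ≤ log r / (r² - 1)`; it remains to multiply by `2r` and
use `|sin θ| ≤ 1`.
-/

lemma self_div_sinh_nonneg (t : ℝ) : 0 ≤ t / sinh t := by
  rcases le_total 0 t with ht | ht
  · exact div_nonneg ht (sinh_nonneg_iff.2 ht)
  · exact div_nonneg_of_nonpos ht (sinh_nonpos_iff.2 ht)

lemma abs_le_abs_sinh (t : ℝ) : |t| ≤ |sinh t| := by
  rw [abs_sinh]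
  exact self_le_sinh_iff.2 (abs_nonneg t)

lemma self_div_sinh_le_one (t : ℝ) : t / sinh t ≤ 1 :=
  calc t / sinh t ≤ |t / sinh t| := le_abs_self _
    _ = |t| / |sinh t| := abs_div t (sinh t)
    _ ≤ 1 := div_le_one_of_le₀ (abs_le_abs_sinh t) (abs_nonneg _)

lemma two_mul_mul_log_div_sq_sub_one {x : ℝ} (hx : 0 < x) :
    2 * x * log x / (x ^ 2 - 1) = log x / sinh (log x) := by
  have hsq : x ^ 2 - 1 = 2 * x * sinh (log x) := by
    rw [sinh_log hx]
    field_simp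
  rw [hsq, mul_div_mul_left _ _ (by positivity)]

lemma mul_exp_neg_mul_le_one_iff_le_log_div {x a c : ℝ} (hx : 0 < x) (ha : a < 0) :
    x * exp (-(c * a)) ≤ 1 ↔ c ≤ log x / a := by
  rw [exp_neg, ← div_eq_mul_inv, div_le_one (exp_pos _), le_div_iff_of_neg ha,
    log_le_iff_le_exp hx]

lemma two_mul_mul_le_of_mul_exp_mul_one_sub_sq_le_one {r c : ℝ} (hr : r ∈ Ioo (0 : ℝ) 1)
    (h : r * exp (c * (1 - r ^ 2)) ≤ 1) : 2 * r * c ≤ 2 * r * log r / (r ^ 2 - 1) := by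
  obtain ⟨hr₀, hr₁⟩ := hr
  have hsq : r ^ 2 - 1 < 0 := sub_neg.2 (pow_lt_one₀ hr₀.le hr₁ two_ne_zero)
  have hc : c ≤ log r / (r ^ 2 - 1) := by
    rwa [← mul_exp_neg_mul_le_one_iff_le_log_div hr₀ hsq, ← mul_neg, neg_sub]
  rw [mul_div_assoc]
  gcongr

theorem arg_estimate_free_unitary_BM_general (s : ℝ) {r : ℝ} (hr : r ∈ Ioo (0 : ℝ) 1) (θ : ℝ) :
    (r * exp (s * (1 - r ^ 2) / (2 - 4 * r * cos θ + 2 * r ^ 2)) ≤ 1 →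
      2 * s * r * |sin θ| / (2 - 4 * r * cos θ + 2 * r ^ 2) ≤ 2 * r * log r / (r ^ 2 - 1)) ∧
    ∀ r' : ℝ, 0 < r' → r' ≠ 1 → 2 * r' * log r' / (r' ^ 2 - 1) ≤ 1 := by
  refine ⟨fun h => ?_, fun r' hr' _ => ?_⟩
  · set D := 2 - 4 * r * cos θ + 2 * r ^ 2
    rw [mul_div_right_comm] at h
    have bound_nonneg : 0 ≤ 2 * r * log r / (r ^ 2 - 1) := by
      rw [two_mul_mul_log_div_sq_sub_one hr.1]
      exact self_div_sinh_nonneg _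
    calc 2 * s * r * |sin θ| / D = 2 * r * (s / D) * |sin θ| := by ring
      _ ≤ 2 * r * log r / (r ^ 2 - 1) * |sin θ| := by
        gcongr
        exact two_mul_mul_le_of_mul_exp_mul_one_sub_sq_le_one hr h
      _ ≤ 2 * r * log r / (r ^ 2 - 1) := mul_le_of_le_one_right bound_nonneg (abs_sin_le_one θ)
  · rw [two_mul_mul_log_div_sq_sub_one hr']
    exact self_div_sinh_le_one _

/-- Estimates (4.10)–(4.11): for `s > 0`, `r ∈ (0,1)`, `θ ∈ ℝ` and
`D = 2 − 4r cos θ + 2r²`, if `r·exp(s(1−r²)/D) < 1` then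
`2sr|sin θ|/D ≤ 2r·log r/(r²−1)`; moreover `2r·log r/(r²−1) ≤ 1` for all
`r ∈ (0,1)`. -/
theorem arg_estimate_free_unitary_BM (s : ℝ) (hs : 0 < s) (r : ℝ)
    (hr : r ∈ Set.Ioo (0 : ℝ) 1) (θ : ℝ) :
    (r * Real.exp (s * (1 - r ^ 2) / (2 - 4 * r * Real.cos θ + 2 * r ^ 2)) < 1 →
      2 * s * r * |Real.sin θ| / (2 - 4 * r * Real.cos θ + 2 * r ^ 2)
        ≤ 2 * r * Real.log r / (r ^ 2 - 1)) ∧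
    ∀ r' : ℝ, r' ∈ Set.Ioo (0 : ℝ) 1 → 2 * r' * Real.log r' / (r' ^ 2 - 1) ≤ 1 :=
  let ⟨arg_le, bound_le_one⟩ := arg_estimate_free_unitary_BM_general s hr θ
  ⟨fun h => arg_le h.le, fun r' hr' => bound_le_one r' hr'.1 hr'.2.ne⟩
end

section
/- Let η : 𝔻 → ℂ be an analytic function on the open unit disc with η(0) = 0 and |η(z)| < 1 for all z ∈ 𝔻. Then there exists a Borel probability measure μ on the unit circle 𝕋 such that η(z) = ψ_μ(z)/(1+ψ_μ(z)) for every z ∈ 𝔻 (in particular 1+ψ_μ(z) ≠ 0 on 𝔻); moreover the first moment m(μ) = ∫_𝕋 ξ dμ(ξ) equals η′(0). -/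
open MeasureTheory Complex Set Metric

/-!
Since `2ψ_μ(z) + 1 = ∫ (ξ⁻¹ + z) / (ξ⁻¹ - z) dμ(ξ)`, the equation `η = ψ_μ / (1 + ψ_μ)` says that
the Cayley transform `(1 + η) / (1 - η)`, which has nonnegative real part and value `1` at `0`, is
the Herglotz integral of the image of `μ` under `ξ ↦ ξ⁻¹`. So the theorem reduces to Herglotz's
representation theorem. For a function holomorphic up to the boundary, that is Schwarz's integral
formula, with the real part of the function as density; the general case follows by applying this to
the dilations `z ↦ f (r z)` and letting `r` tend to `1`, by weak compactness of the set of measures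
of bounded mass.
-/

open Filter Topology Real InnerProductSpace
open scoped NNReal

theorem exists_finiteMeasure_forall_integral_eq_of_tendsto {E : Type*} [TopologicalSpace E]
    [CompactSpace E] [T2Space E] [MeasurableSpace E] [BorelSpace E] {γ ι 𝕜 : Type*} [RCLike 𝕜]
    {l : Filter γ} [l.NeBot] {μ : γ → FiniteMeasure E} {C : ℝ≥0} (hμ : ∀ᶠ n in l, (μ n).mass ≤ C)
    {g : ι → C(E, 𝕜)} {L : ι → 𝕜} (hg : ∀ i, Tendsto (fun n ↦ ∫ x, g i x ∂(μ n)) l (𝓝 (L i))) :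
    ∃ ν : FiniteMeasure E, ∀ i, ∫ x, g i x ∂ν = L i := by
  obtain ⟨ν, -, hν⟩ :=
    (isCompact_setOfPred_finiteMeasure_le_of_compactSpace E C).exists_mapClusterPt
      (tendsto_principal.2 hμ)
  obtain ⟨U, hUl, hUν⟩ := mapClusterPt_iff_ultrafilter.1 hν
  refine ⟨ν, fun i ↦ ?_⟩
  have hlim := (FiniteMeasure.tendsto_iff_forall_integral_rclike_tendsto 𝕜).1 hUν
    (BoundedContinuousFunction.mkOfCompact (g i))
  exact tendsto_nhds_unique hlim ((hg i).mono_left hUl)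

theorem exists_finiteMeasure_integral_eq_circleAverage {E : Type*} [NormedAddCommGroup E]
    [NormedSpace ℝ E] {c : ℂ} {R : ℝ} (hR : 0 ≤ R) {ρ : ℂ → ℝ} (hρ : CircleIntegrable ρ c R)
    (hρ_nonneg : ∀ ζ ∈ sphere c R, 0 ≤ ρ ζ) :
    ∃ μ : FiniteMeasure (sphere c R), ∀ F : ℂ → E, ContinuousOn F (sphere c R) →
      ∫ ξ, F ξ ∂(μ : Measure (sphere c R)) = circleAverage (fun ζ ↦ ρ ζ • F ζ) c R := by
  let param : ℝ → sphere c R := fun θ ↦ ⟨circleMap c R θ, circleMap_mem_sphere c hR θ⟩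
  have hparam : Measurable param := ((continuous_circleMap c R).subtype_mk _).measurable
  let density : ℝ → ℝ := fun θ ↦ (2 * π)⁻¹ * ρ (circleMap c R θ)
  have hdensity : IntegrableOn density (Ioc 0 (2 * π)) :=
    ((intervalIntegrable_iff_integrableOn_Ioc_of_le two_pi_pos.le).1 hρ).const_mul _
  have hdensity_nonneg (θ : ℝ) : 0 ≤ density θ :=
    mul_nonneg (inv_nonneg.2 two_pi_pos.le) (hρ_nonneg _ (circleMap_mem_sphere c hR θ))
  let ν : Measure ℝ :=
    (volume.restrict (Ioc 0 (2 * π))).withDensity fun θ ↦ ENNReal.ofReal (density θ)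
  have : IsFiniteMeasure ν := isFiniteMeasure_withDensity_ofReal hdensity.2
  refine ⟨⟨ν.map param, inferInstance⟩, fun F hF ↦ ?_⟩
  have hF_meas : AEStronglyMeasurable (fun ξ : sphere c R ↦ F ξ) (ν.map param) :=
    (continuousOn_iff_continuous_domRestrict.1 hF).aestronglyMeasurable
  calc ∫ ξ, F ξ ∂(ν.map param)
      = ∫ θ, F (circleMap c R θ) ∂ν := integral_map hparam.aemeasurable hF_meas
    _ = ∫ θ in Ioc 0 (2 * π), density θ • F (circleMap c R θ) := by
        rw [integral_withDensity_eq_integral_toReal_smul₀ hdensity.aemeasurable.ennreal_ofReal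
          (Eventually.of_forall fun _ ↦ ENNReal.ofReal_lt_top)]
        simp only [ENNReal.toReal_ofReal (hdensity_nonneg _)]
    _ = circleAverage (fun ζ ↦ ρ ζ • F ζ) c R := by
        rw [circleAverage_def, intervalIntegral.integral_of_le two_pi_pos.le, ← integral_smul]
        simp only [density, mul_smul]

section Herglotz

variable {R : ℝ} {f : ℂ → ℂ} {z : ℂ}

lemma harmonicContOnCl_re_of_diffContOnCl {s : Set ℂ} (hs : IsOpen s) (hf : DiffContOnCl ℂ f s) :
    HarmonicContOnCl (fun w ↦ (f w).re) s where
  harmonicOnNhd _ hw := (hf.differentiableOn.analyticAt (hs.mem_nhds hw)).harmonicAt_re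
  continuousOn := continuous_re.comp_continuousOn hf.continuousOn

lemma herglotzRieszKernel_self_left {c ζ : ℂ} (hζ : ζ ≠ c) : herglotzRieszKernel c c ζ = 1 := by
  simp [herglotzRieszKernel_def, sub_ne_zero.2 hζ]

lemma continuous_herglotzRieszKernel_comp_coe_sphere {c : ℂ} (hz : z ∈ ball c R) :
    Continuous fun ξ : sphere c R ↦ herglotzRieszKernel c z ξ := by
  have h := continuousOn_herglotzRieszKernel_sphere hz
  rw [abs_of_pos (pos_of_mem_ball hz)] at h
  exact continuousOn_iff_continuous_domRestrict.1 h

/-- Schwarz's integral formula. The left side and `f` are holomorphic in `z` with the same real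
part, so they differ by a constant, which the mean value property gives at `z = 0`. -/
theorem circleAverage_herglotzRieszKernel_smul_re (hf : DiffContOnCl ℂ f (ball 0 R))
    (hz : z ∈ ball 0 R) :
    circleAverage (fun ζ ↦ herglotzRieszKernel 0 z ζ • ((f ζ).re : ℂ)) 0 R =
      f z - (f 0).im * I := by
  have hR : 0 < R := pos_of_mem_ball hz
  have h0 : (0 : ℂ) ∈ ball 0 R := mem_ball_self hR
  have hre : HarmonicContOnCl (fun ζ ↦ (f ζ).re) (ball 0 R) :=
    harmonicContOnCl_re_of_diffContOnCl isOpen_ball hf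
  have hre_cont : ContinuousOn (fun ζ ↦ (f ζ).re) (sphere 0 R) :=
    hre.continuousOn_ball.mono sphere_subset_closedBall
  have hre_int : CircleIntegrable (fun ζ ↦ (f ζ).re) 0 R := hre_cont.circleIntegrable hR.le
  let S : ℂ → ℂ := fun w ↦
    circleAverage (fun ζ ↦ herglotzRieszKernel 0 w ζ • ((f ζ).re : ℂ)) 0 R
  have hS : AnalyticOnNhd ℂ S (ball 0 R) :=
    analyticOnNhd_circleAverage_herglotzRieszKernel_smul
      (continuous_ofReal.comp_continuousOn hre_cont |>.circleIntegrable hR.le)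
  have hS_re (w : ℂ) (hw : w ∈ ball 0 R) : (S w - f w).re = 0 := by
    rw [sub_re, re_circleAverage_herglotzRieszKernel_smul hre_int hw,
      hre.circleAverage_re_herglotzRieszKernel_smul hw, sub_self]
  have hS_zero : S 0 = (f 0).re := calc
    S 0 = circleAverage (ofRealCLM ∘ fun ζ ↦ (f ζ).re) 0 R := by
        refine circleAverage_congr_sphere fun ζ hζ ↦ ?_
        have hζ0 : ζ ≠ 0 := ne_of_mem_sphere hζ (abs_pos.2 hR.ne').ne'
        simp [herglotzRieszKernel_self_left hζ0]
    _ = (f 0).re := by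
        rw [ofRealCLM.circleAverage_comp_comm hre_int,
          InnerProductSpace.HarmonicContOnCl.circleAverage_eq (by rwa [abs_of_pos hR]),
          ofRealCLM_apply]
  obtain ⟨a, ha⟩ := (hS.sub (hf.differentiableOn.analyticOnNhd isOpen_ball))
    |>.eq_const_of_re_eq_const hS_re isOpen_ball ((convex_ball 0 R).isConnected ⟨0, h0⟩)
  have hconst : S z - f z = S 0 - f 0 := (ha z hz).trans (ha 0 h0).symm
  calc S z = f z + (S 0 - f 0) := eq_add_of_sub_eq' hconst
    _ = f z - (f 0).im * I := by rw [hS_zero]; linear_combination re_add_im (f 0)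

/-- The finite measure `μ` on the circle of radius `R` represents `f` on the enclosed disc by
Herglotz's formula. The values of `f` outside the open disc are irrelevant. -/
def IsHerglotzMeasure (μ : FiniteMeasure (sphere (0 : ℂ) R)) (f : ℂ → ℂ) : Prop :=
  ∀ z ∈ ball (0 : ℂ) R, f z = ∫ ξ : sphere (0 : ℂ) R, herglotzRieszKernel 0 z ξ ∂μ + (f 0).im * I

lemma IsHerglotzMeasure.mass_eq {μ : FiniteMeasure (sphere (0 : ℂ) R)}
    (hμ : IsHerglotzMeasure μ f) (hR : 0 < R) : (μ.mass : ℝ) = (f 0).re := by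
  have hkernel (ξ : sphere (0 : ℂ) R) : herglotzRieszKernel 0 0 (ξ : ℂ) = 1 :=
    herglotzRieszKernel_self_left (ne_of_mem_sphere ξ.2 hR.ne')
  have h := congrArg re (hμ 0 (mem_ball_self hR))
  simpa [hkernel, ← FiniteMeasure.ennreal_mass, measureReal_def] using h.symm

theorem exists_isHerglotzMeasure_of_diffContOnCl (hR : 0 < R) (hf : DiffContOnCl ℂ f (ball 0 R))
    (hf_re : ∀ ζ ∈ sphere 0 R, 0 ≤ (f ζ).re) :
    ∃ μ : FiniteMeasure (sphere (0 : ℂ) R), IsHerglotzMeasure μ f := by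
  have hre_cont : ContinuousOn (fun ζ ↦ (f ζ).re) (sphere 0 R) :=
    continuous_re.comp_continuousOn (hf.continuousOn_ball.mono sphere_subset_closedBall)
  obtain ⟨μ, hμ⟩ := exists_finiteMeasure_integral_eq_circleAverage (E := ℂ) hR.le
    (hre_cont.circleIntegrable hR.le) hf_re
  refine ⟨μ, fun z hz ↦ ?_⟩
  have hkernel : ContinuousOn (herglotzRieszKernel 0 z) (sphere 0 R) :=
    continuousOn_iff_continuous_domRestrict.2 (continuous_herglotzRieszKernel_comp_coe_sphere hz)
  calc f z = circleAverage (fun ζ ↦ herglotzRieszKernel 0 z ζ • ((f ζ).re : ℂ)) 0 R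
        + (f 0).im * I := by
        rw [circleAverage_herglotzRieszKernel_smul_re hf hz, sub_add_cancel]
    _ = ∫ ξ : sphere (0 : ℂ) R, herglotzRieszKernel 0 z ξ ∂μ + (f 0).im * I := by
        rw [hμ _ hkernel]
        simp only [smul_eq_mul, real_smul, mul_comm]

theorem exists_isHerglotzMeasure_of_tendsto {γ : Type*} {l : Filter γ} [l.NeBot] {F : γ → ℂ → ℂ}
    (hR : 0 < R) (hF : ∀ᶠ n in l, ∃ μ : FiniteMeasure (sphere (0 : ℂ) R), IsHerglotzMeasure μ (F n))
    (hlim : ∀ z ∈ ball 0 R, Tendsto (fun n ↦ F n z) l (𝓝 (f z))) :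
    ∃ μ : FiniteMeasure (sphere (0 : ℂ) R), IsHerglotzMeasure μ f := by
  obtain ⟨μ, hμ⟩ := hF.choice
  have hlim_zero : Tendsto (fun n ↦ F n 0) l (𝓝 (f 0)) := hlim 0 (mem_ball_self hR)
  have hre : ∀ᶠ n in l, (F n 0).re < (f 0).re + 1 :=
    ((continuous_re.tendsto _).comp hlim_zero).eventually_lt_const (lt_add_one _)
  have hmass : ∀ᶠ n in l, (μ n).mass ≤ ((f 0).re + 1).toNNReal := by
    filter_upwards [hμ, hre] with n hn hn_re
    exact NNReal.le_toNNReal_of_coe_le ((hn.mass_eq hR).trans_le hn_re.le)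
  let kernel (z : ball (0 : ℂ) R) : C(sphere (0 : ℂ) R, ℂ) :=
    ⟨fun ξ ↦ herglotzRieszKernel 0 z ξ, continuous_herglotzRieszKernel_comp_coe_sphere z.2⟩
  have hintegral (z : ball (0 : ℂ) R) :
      Tendsto (fun n ↦ ∫ ξ, kernel z ξ ∂(μ n)) l (𝓝 (f z - (f 0).im * I)) := by
    have him : Tendsto (fun n ↦ ((F n 0).im * I : ℂ)) l (𝓝 ((f 0).im * I)) :=
      (Continuous.tendsto (f := fun w : ℂ ↦ (w.im * I : ℂ)) (by fun_prop) _).comp hlim_zero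
    refine ((hlim z z.2).sub him).congr' ?_
    filter_upwards [hμ] with n hn
    exact sub_eq_of_eq_add (hn z z.2)
  obtain ⟨ν, hν⟩ := exists_finiteMeasure_forall_integral_eq_of_tendsto hmass hintegral
  exact ⟨ν, fun z hz ↦ eq_add_of_sub_eq (hν ⟨z, hz⟩).symm⟩

theorem exists_isHerglotzMeasure (hR : 0 < R) (hf : DifferentiableOn ℂ f (ball 0 R))
    (hf_re : ∀ z ∈ ball 0 R, 0 ≤ (f z).re) :
    ∃ μ : FiniteMeasure (sphere (0 : ℂ) R), IsHerglotzMeasure μ f := by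
  refine exists_isHerglotzMeasure_of_tendsto (l := 𝓝[<] (1 : ℝ)) (F := fun r w ↦ f (r * w)) hR ?_
    fun z hz ↦ ?_
  · filter_upwards [Ioo_mem_nhdsLT one_pos] with r hr
    have hdil : MapsTo (fun w : ℂ ↦ r * w) (closedBall 0 R) (ball 0 R) := fun w hw ↦ by
      rw [mem_closedBall_zero_iff] at hw
      rw [mem_ball_zero_iff, norm_mul, norm_real, norm_of_nonneg hr.1.le]
      nlinarith [hr.1, hr.2]
    refine exists_isHerglotzMeasure_of_diffContOnCl hR (DifferentiableOn.diffContOnCl ?_)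
      fun ζ hζ ↦ hf_re _ (hdil (sphere_subset_closedBall hζ))
    rw [closure_ball _ hR.ne']
    exact hf.comp (by fun_prop) hdil
  · have hscale : Tendsto (fun r : ℝ ↦ (r : ℂ) * z) (𝓝[<] 1) (𝓝 z) :=
      tendsto_nhdsWithin_of_tendsto_nhds (Continuous.tendsto' (by fun_prop) _ _ (by simp))
    exact (hf.continuousOn.continuousAt (isOpen_ball.mem_nhds hz)).tendsto.comp hscale

end Herglotz

section PsiTransform

variable {ξ z : ℂ}

lemma one_sub_norm_le_norm_one_sub_mul (hξ : ‖ξ‖ ≤ 1) : 1 - ‖z‖ ≤ ‖1 - ξ * z‖ := by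
  have hmul : ‖ξ * z‖ ≤ ‖z‖ := by
    simpa only [norm_mul, one_mul] using mul_le_mul_of_nonneg_right hξ (norm_nonneg z)
  have htri := norm_sub_norm_le 1 (ξ * z)
  rw [norm_one] at htri
  linarith

lemma one_sub_mul_ne_zero (hξ : ‖ξ‖ ≤ 1) (hz : ‖z‖ < 1) : 1 - ξ * z ≠ 0 :=
  norm_pos_iff.1 ((sub_pos.2 hz).trans_le (one_sub_norm_le_norm_one_sub_mul hξ))

lemma hasDerivAt_mul_div_one_sub_mul (h : 1 - ξ * z ≠ 0) :
    HasDerivAt (fun w ↦ ξ * w / (1 - ξ * w)) (ξ / (1 - ξ * z) ^ 2) z := by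
  have hmul : HasDerivAt (fun w ↦ ξ * w) ξ z := by simpa using (hasDerivAt_id z).const_mul ξ
  exact (hmul.fun_div (hmul.const_sub 1) h).congr_deriv (by ring)

lemma integrable_mul_div_one_sub_mul {μ : Measure ℂ} [IsFiniteMeasure μ]
    (hμ : ∀ᵐ ξ ∂μ, ‖ξ‖ ≤ 1) (hz : ‖z‖ < 1) : Integrable (fun ξ ↦ ξ * z / (1 - ξ * z)) μ := by
  refine .of_bound (Measurable.aestronglyMeasurable (by fun_prop)) (1 / (1 - ‖z‖)) ?_
  filter_upwards [hμ] with ξ hξ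
  rw [norm_div, norm_mul]
  have : 0 < 1 - ‖z‖ := sub_pos.2 hz
  gcongr
  · exact mul_le_one₀ hξ (norm_nonneg z) hz.le
  · exact one_sub_norm_le_norm_one_sub_mul hξ

theorem hasDerivAt_psiC {μ : Measure ℂ} [IsFiniteMeasure μ] (hμ : ∀ᵐ ξ ∂μ, ‖ξ‖ ≤ 1)
    (hz : ‖z‖ < 1) : HasDerivAt (psiC μ) (∫ ξ, ξ / (1 - ξ * z) ^ 2 ∂μ) z := by
  obtain ⟨r, hzr, hr⟩ := exists_between hz
  have hball : ball (0 : ℂ) r ∈ 𝓝 z := isOpen_ball.mem_nhds (mem_ball_zero_iff.2 hzr)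
  have hbound : ∀ᵐ ξ ∂μ, ∀ w ∈ ball (0 : ℂ) r, ‖ξ / (1 - ξ * w) ^ 2‖ ≤ 1 / (1 - r) ^ 2 := by
    filter_upwards [hμ] with ξ hξ w hw
    have hwr : ‖w‖ < r := mem_ball_zero_iff.1 hw
    have : 0 < 1 - r := sub_pos.2 hr
    rw [norm_div, norm_pow]
    gcongr
    linarith [one_sub_norm_le_norm_one_sub_mul (z := w) hξ]
  have hderiv : ∀ᵐ ξ ∂μ, ∀ w ∈ ball (0 : ℂ) r,
      HasDerivAt (fun w ↦ ξ * w / (1 - ξ * w)) (ξ / (1 - ξ * w) ^ 2) w := by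
    filter_upwards [hμ] with ξ hξ w hw
    exact hasDerivAt_mul_div_one_sub_mul
      (one_sub_mul_ne_zero hξ ((mem_ball_zero_iff.1 hw).trans hr))
  exact (hasDerivAt_integral_of_dominated_loc_of_deriv_le hball
    (.of_forall fun w ↦ Measurable.aestronglyMeasurable (by fun_prop))
    (integrable_mul_div_one_sub_mul hμ hz) (Measurable.aestronglyMeasurable (by fun_prop))
    hbound (integrable_const _) hderiv).2

lemma herglotzRieszKernel_zero_eq_one_add (hξ : ξ ≠ 0) (hξz : ξ ≠ z) :
    herglotzRieszKernel 0 z ξ = 1 + 2 * (ξ⁻¹ * z / (1 - ξ⁻¹ * z)) := by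
  have hsub : ξ - z ≠ 0 := sub_ne_zero.2 hξz
  rw [herglotzRieszKernel_def, sub_zero, sub_zero]
  field_simp
  ring

theorem integral_herglotzRieszKernel_eq_add_psiC (ν : Measure (sphere (0 : ℂ) 1))
    [IsFiniteMeasure ν] (hz : ‖z‖ < 1) :
    ∫ ξ : sphere (0 : ℂ) 1, herglotzRieszKernel 0 z ξ ∂ν =
      ν.real univ + 2 * psiC (ν.map fun ξ : sphere (0 : ℂ) 1 ↦ (ξ : ℂ)⁻¹) z := by
  let inv : sphere (0 : ℂ) 1 → ℂ := fun ξ ↦ (ξ : ℂ)⁻¹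
  have hinv : Measurable inv := measurable_subtype_coe.inv
  have hinv_norm (ξ : sphere (0 : ℂ) 1) : ‖inv ξ‖ ≤ 1 := by simp [inv]
  have hint : Integrable (fun ξ : ℂ ↦ ξ * z / (1 - ξ * z)) (ν.map inv) :=
    integrable_mul_div_one_sub_mul
      ((ae_map_iff hinv.aemeasurable (by measurability)).2 (.of_forall hinv_norm)) hz
  have hint_comp : Integrable (fun ξ ↦ inv ξ * z / (1 - inv ξ * z)) ν := hint.comp_measurable hinv
  have hkernel (ξ : sphere (0 : ℂ) 1) :
      herglotzRieszKernel 0 z ξ = 1 + 2 * (inv ξ * z / (1 - inv ξ * z)) := by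
    refine herglotzRieszKernel_zero_eq_one_add (ne_of_mem_sphere ξ.2 one_ne_zero) fun h ↦ ?_
    exact hz.ne (h ▸ norm_eq_of_mem_sphere ξ)
  calc ∫ ξ : sphere (0 : ℂ) 1, herglotzRieszKernel 0 z ξ ∂ν
      = ν.real univ + 2 * ∫ ξ, inv ξ * z / (1 - inv ξ * z) ∂ν := by
        simp only [hkernel]
        rw [integral_add (integrable_const _) (hint_comp.const_mul 2), integral_const,
          integral_const_mul, real_smul, mul_one]
    _ = ν.real univ + 2 * psiC (ν.map inv) z := by
        rw [psiC, integral_map hinv.aemeasurable hint.aestronglyMeasurable]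

theorem exists_isProbabilityMeasure_eq_one_add_psiC {f : ℂ → ℂ}
    (hf : DifferentiableOn ℂ f (ball 0 1)) (hf_re : ∀ z ∈ ball 0 1, 0 ≤ (f z).re) (hf0 : f 0 = 1) :
    ∃ μ : Measure ℂ, IsProbabilityMeasure μ ∧ μ (sphere (0 : ℂ) 1)ᶜ = 0 ∧
      ∀ z ∈ ball (0 : ℂ) 1, f z = 1 + 2 * psiC μ z := by
  obtain ⟨ν, hν⟩ := exists_isHerglotzMeasure one_pos hf hf_re
  have hmass : (ν.mass : ℝ) = 1 := by rw [hν.mass_eq one_pos, hf0, one_re]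
  have hν_prob : IsProbabilityMeasure (ν : Measure (sphere (0 : ℂ) 1)) :=
    ⟨by rw [← FiniteMeasure.ennreal_mass, NNReal.coe_eq_one.1 hmass, ENNReal.coe_one]⟩
  have hinv : Measurable fun ξ : sphere (0 : ℂ) 1 ↦ (ξ : ℂ)⁻¹ := measurable_subtype_coe.inv
  refine ⟨(ν : Measure (sphere (0 : ℂ) 1)).map fun ξ : sphere (0 : ℂ) 1 ↦ (ξ : ℂ)⁻¹,
    Measure.isProbabilityMeasure_map hinv.aemeasurable, ?_, fun z hz ↦ ?_⟩
  · rw [Measure.map_apply hinv isClosed_sphere.measurableSet.compl]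
    convert measure_empty (μ := (ν : Measure (sphere (0 : ℂ) 1)))
    ext ξ
    simp
  · rw [hν z hz, integral_herglotzRieszKernel_eq_add_psiC _ (mem_ball_zero_iff.1 hz), hf0]
    simp

lemma re_one_add_div_one_sub_nonneg (hz : ‖z‖ ≤ 1) : 0 ≤ ((1 + z) / (1 - z)).re := by
  have h := congrFun (poissonKernel_eq_re_herglotzRieszKernel (c := 0) (w := z)) 1
  simp only [poissonKernel_def, Function.comp_apply, herglotzRieszKernel_def, sub_zero] at h
  rw [← h, norm_one]
  exact div_nonneg (sub_nonneg.2 (pow_le_pow_left₀ (norm_nonneg z) hz 2)) (sq_nonneg _)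

lemma eq_div_one_add_of_one_add_div_one_sub {w ψ : ℂ} (hw : w ≠ 1)
    (h : (1 + w) / (1 - w) = 1 + 2 * ψ) : 1 + ψ ≠ 0 ∧ w = ψ / (1 + ψ) := by
  have hsub : 1 - w ≠ 0 := sub_ne_zero.2 hw.symm
  have hψ : (1 + ψ) * (1 - w) = 1 := by
    rw [div_eq_iff hsub] at h
    linear_combination -h / 2
  have hψ0 : 1 + ψ ≠ 0 := left_ne_zero_of_mul_eq_one hψ
  exact ⟨hψ0, by rw [eq_div_iff hψ0]; linear_combination -hψ⟩

theorem hasDerivAt_psiC_div_one_add_psiC {μ : Measure ℂ} [IsFiniteMeasure μ]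
    (hμ : ∀ᵐ ξ ∂μ, ‖ξ‖ ≤ 1) : HasDerivAt (fun z ↦ psiC μ z / (1 + psiC μ z)) (∫ ξ, ξ ∂μ) 0 := by
  have hψ0 : psiC μ 0 = 0 := by simp [psiC]
  have hψ : HasDerivAt (psiC μ) (∫ ξ, ξ ∂μ) 0 := by
    simpa using hasDerivAt_psiC hμ (z := 0) (by simp)
  exact (hψ.fun_div (hψ.const_add 1) (by simp [hψ0])).congr_deriv (by simp [hψ0])

end PsiTransform

/-- Every analytic self-map `η` of the open unit disc with `η(0) = 0` and `|η| < 1`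
is the η-transform of a Borel probability measure `μ` on the unit circle, and the
first moment `m(μ) = ∫_𝕋 ξ dμ(ξ)` equals `η′(0)`. -/
theorem eta_characterization (η : ℂ → ℂ)
    (hηan : AnalyticOnNhd ℂ η (ball 0 1)) (hη0 : η 0 = 0)
    (hηlt : ∀ z ∈ ball (0 : ℂ) 1, ‖η z‖ < 1) :
    ∃ μ : Measure ℂ, IsProbabilityMeasure μ ∧ μ (sphere (0 : ℂ) 1)ᶜ = 0 ∧
      (∀ z ∈ ball (0 : ℂ) 1, 1 + psiC μ z ≠ 0 ∧ η z = psiC μ z / (1 + psiC μ z)) ∧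
      ∫ ξ, ξ ∂μ = deriv η 0 := by
  have hη1 (z : ℂ) (hz : z ∈ ball 0 1) : η z ≠ 1 := fun h ↦ by simpa [h] using hηlt z hz
  have hη_diff : DifferentiableOn ℂ η (ball 0 1) := hηan.differentiableOn
  have hcayley : DifferentiableOn ℂ (fun z ↦ (1 + η z) / (1 - η z)) (ball 0 1) :=
    (hη_diff.const_add 1).fun_div (hη_diff.const_sub 1) fun z hz ↦ sub_ne_zero.2 (hη1 z hz).symm
  obtain ⟨μ, hμ_prob, hμ_sphere, hμ⟩ := exists_isProbabilityMeasure_eq_one_add_psiC hcayley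
    (fun z hz ↦ re_one_add_div_one_sub_nonneg (hηlt z hz).le) (by simp [hη0])
  have hη (z : ℂ) (hz : z ∈ ball 0 1) : 1 + psiC μ z ≠ 0 ∧ η z = psiC μ z / (1 + psiC μ z) :=
    eq_div_one_add_of_one_add_div_one_sub (hη1 z hz) (hμ z hz)
  have hμ_norm : ∀ᵐ ξ ∂μ, ‖ξ‖ ≤ 1 :=
    (measure_eq_zero_iff_ae_notMem.1 hμ_sphere).mono fun ξ hξ ↦
      (norm_eq_of_mem_sphere ⟨ξ, notMem_compl_iff.1 hξ⟩).le
  have hη_eq : η =ᶠ[𝓝 0] fun z ↦ psiC μ z / (1 + psiC μ z) :=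
    eventually_of_mem (ball_mem_nhds 0 one_pos) fun z hz ↦ (hη z hz).2
  exact ⟨μ, hμ_prob, hμ_sphere, hη,
    ((hasDerivAt_psiC_div_one_add_psiC hμ_norm).congr_of_eventuallyEq hη_eq).deriv.symm⟩
end
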